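/- arXiv:1211.6499 — 2 statements merged into one kernel-verified Lean document; each statement's English description precedes it below -/
import Mathlib

section
/- Theorem 3.1 (lower blow-up rate): Let λ₁ = λ₂ = λ > 0 and let (u,v) be a classical solution of problem (1.1) that blows up at time T < ∞. Assume in addition that the initial data satisfy u₀'(r) − (r/R)e^{v₀(r)} ≥ 0 and v₀'(r) − (r/R)e^{u₀(r)} ≥ 0 for all r ∈ [0,R]. Then there exists a constant c > 0 such that for all t ∈ (0,T): u(R,t) ≥ log c − (1/2) log(T−t) and v(R,t) ≥ log c − (1/2) log(T−t); equivalently e^{u(R,t)} ≥ c (T−t)^{−1/2} and e^{v(R,t)} ≥ c (T−t)^{−1/2}. -/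
/-!
The lower rate is a statement about the lifespan of a solution issued from bounded data, and every
step is a first contact argument (`first_touch`) that uses only the separate regularity of the
solution in space and in time.

* If both components are at most `M` at time `t₀`, then
  `M + G (t - t₀) + exp (k (‖x‖² - R²))` with `k = exp (M + 2) / R` and `G` of order `exp (2 M)` is
  a supersolution as long as `G (t - t₀) ≤ 1`, hence both components stay below `M + 2` on that time
  interval (`SymSol.lt_add_two`).  Blow-up at `T` therefore forces `G (T - t₀) ≥ 1`, that is
  `M ≥ const - (1/2) log (T - t₀)`.
* The maximum over the ball is attained at every boundary point: the solution is radial, by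
  comparison with its composition with a reflection (`SymSol.le_comp_isometry`), and nondecreasing
  in the radius, by doubling the variables (`SymSol.le_of_norm_le`).
* The two components differ by at most a constant, because the difference `u - v` has a reaction
  term and a boundary flux of the opposite sign (`SymSol.sub_lt`).  So `M` can be taken to be
  `u + K` or `v + K` at any boundary point; `SymSol.gt_neg_one` gives `M ≥ 0`.
-/

open Set Real Metric MeasureTheory Filter Topology

/-- The Euclidean Laplacian of `f : ℝⁿ → ℝ` at `x`, computed as the sum of second
directional derivatives along the coordinate directions. -/
noncomputable def lap {n : ℕ} (f : EuclideanSpace ℝ (Fin n) → ℝ)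
    (x : EuclideanSpace ℝ (Fin n)) : ℝ :=
  ∑ i : Fin n, iteratedDeriv 2 (fun s : ℝ => f (x + s • EuclideanSpace.single i (1 : ℝ))) 0

/-- The outward normal derivative `∇f · (x/R)` on the sphere of radius `R`. -/
noncomputable def normalDeriv {n : ℕ} (R : ℝ) (f : EuclideanSpace ℝ (Fin n) → ℝ)
    (x : EuclideanSpace ℝ (Fin n)) : ℝ :=
  deriv (fun s : ℝ => f (x + s • (R⁻¹ • x))) 0

/-- Admissible initial data for problem (1.1): nonnegative, smooth, radial with
nondecreasing radial profiles, and satisfying the compatibility conditions. -/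
structure AdmissibleData (n : ℕ) (R : ℝ)
    (u₀ v₀ : EuclideanSpace ℝ (Fin n) → ℝ) : Prop where
  u0_nonneg : ∀ x ∈ closedBall (0 : EuclideanSpace ℝ (Fin n)) R, 0 ≤ u₀ x
  v0_nonneg : ∀ x ∈ closedBall (0 : EuclideanSpace ℝ (Fin n)) R, 0 ≤ v₀ x
  u0_smooth : ContDiffOn ℝ (⊤ : ℕ∞) u₀ (closedBall (0 : EuclideanSpace ℝ (Fin n)) R)
  v0_smooth : ContDiffOn ℝ (⊤ : ℕ∞) v₀ (closedBall (0 : EuclideanSpace ℝ (Fin n)) R)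
  u0_radial_mono : ∀ x ∈ closedBall (0 : EuclideanSpace ℝ (Fin n)) R,
    ∀ y ∈ closedBall (0 : EuclideanSpace ℝ (Fin n)) R, ‖x‖ ≤ ‖y‖ → u₀ x ≤ u₀ y
  v0_radial_mono : ∀ x ∈ closedBall (0 : EuclideanSpace ℝ (Fin n)) R,
    ∀ y ∈ closedBall (0 : EuclideanSpace ℝ (Fin n)) R, ‖x‖ ≤ ‖y‖ → v₀ x ≤ v₀ y
  compat_u : ∀ x : EuclideanSpace ℝ (Fin n), ‖x‖ = R → normalDeriv R u₀ x = Real.exp (v₀ x)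
  compat_v : ∀ x : EuclideanSpace ℝ (Fin n), ‖x‖ = R → normalDeriv R v₀ x = Real.exp (u₀ x)
  compat_u' : ∀ x ∈ closedBall (0 : EuclideanSpace ℝ (Fin n)) R, 0 ≤ lap u₀ x + Real.exp (v₀ x)
  compat_v' : ∀ x ∈ closedBall (0 : EuclideanSpace ℝ (Fin n)) R, 0 ≤ lap v₀ x + Real.exp (u₀ x)

/-- A classical solution of problem (1.1) on `[0,T)` on the ball of radius `R`:
continuous on `cl(B_R) × [0,T)`, of class C²,¹ on `cl(B_R) × (0,T)`, satisfying the
equations `u_t = Δu + λ₁ e^v`, `v_t = Δv + λ₂ e^u` in `B_R × (0,T)`, the boundary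
conditions `∂u/∂η = e^v`, `∂v/∂η = e^u` on `∂B_R × (0,T)`, and the initial conditions. -/
structure IsClassicalSolution (n : ℕ) (R T lam1 lam2 : ℝ)
    (u v : EuclideanSpace ℝ (Fin n) → ℝ → ℝ)
    (u₀ v₀ : EuclideanSpace ℝ (Fin n) → ℝ) : Prop where
  cont_u : ContinuousOn (fun p : EuclideanSpace ℝ (Fin n) × ℝ => u p.1 p.2)
    ((closedBall (0 : EuclideanSpace ℝ (Fin n)) R) ×ˢ Ico (0 : ℝ) T)
  cont_v : ContinuousOn (fun p : EuclideanSpace ℝ (Fin n) × ℝ => v p.1 p.2)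
    ((closedBall (0 : EuclideanSpace ℝ (Fin n)) R) ×ˢ Ico (0 : ℝ) T)
  reg_space_u : ∀ t ∈ Ioo (0 : ℝ) T,
    ContDiffOn ℝ 2 (fun x => u x t) (closedBall (0 : EuclideanSpace ℝ (Fin n)) R)
  reg_space_v : ∀ t ∈ Ioo (0 : ℝ) T,
    ContDiffOn ℝ 2 (fun x => v x t) (closedBall (0 : EuclideanSpace ℝ (Fin n)) R)
  reg_time_u : ∀ x ∈ closedBall (0 : EuclideanSpace ℝ (Fin n)) R, ∀ t ∈ Ioo (0 : ℝ) T,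
    DifferentiableAt ℝ (u x) t
  reg_time_v : ∀ x ∈ closedBall (0 : EuclideanSpace ℝ (Fin n)) R, ∀ t ∈ Ioo (0 : ℝ) T,
    DifferentiableAt ℝ (v x) t
  pde_u : ∀ x ∈ ball (0 : EuclideanSpace ℝ (Fin n)) R, ∀ t ∈ Ioo (0 : ℝ) T,
    deriv (u x) t = lap (fun y => u y t) x + lam1 * Real.exp (v x t)
  pde_v : ∀ x ∈ ball (0 : EuclideanSpace ℝ (Fin n)) R, ∀ t ∈ Ioo (0 : ℝ) T,
    deriv (v x) t = lap (fun y => v y t) x + lam2 * Real.exp (u x t)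
  bc_u : ∀ x : EuclideanSpace ℝ (Fin n), ‖x‖ = R → ∀ t ∈ Ioo (0 : ℝ) T,
    normalDeriv R (fun y => u y t) x = Real.exp (v x t)
  bc_v : ∀ x : EuclideanSpace ℝ (Fin n), ‖x‖ = R → ∀ t ∈ Ioo (0 : ℝ) T,
    normalDeriv R (fun y => v y t) x = Real.exp (u x t)
  init_u : ∀ x ∈ closedBall (0 : EuclideanSpace ℝ (Fin n)) R, u x 0 = u₀ x
  init_v : ∀ x ∈ closedBall (0 : EuclideanSpace ℝ (Fin n)) R, v x 0 = v₀ x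

/-- `(u,v)` blows up at time `T`: `limsup_{t→T⁻} sup_{cl(B_R)} (u(·,t) + v(·,t)) = ∞`. -/
def BlowsUpAt (n : ℕ) (R T : ℝ) (u v : EuclideanSpace ℝ (Fin n) → ℝ → ℝ) : Prop :=
  ∀ M : ℝ, ∃ᶠ t in 𝓝[<] T, ∃ x ∈ closedBall (0 : EuclideanSpace ℝ (Fin n)) R, M < u x t + v x t


/-! ### One-sided derivative and Laplacian comparison at a contact point -/

/-- If `g ≤ p` to the left of `t` with equality at `t`, then the derivative of `g` at `t` is at least
that of `p`. -/
lemma deriv_le_of_touch {g p : ℝ → ℝ} {t₀ t a b : ℝ} (ht : t₀ < t)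
    (hg : HasDerivAt g a t) (hp : HasDerivAt p b t)
    (hle : ∀ s ∈ Icc t₀ t, g s ≤ p s) (heq : g t = p t) : b ≤ a := by
  have hd := (hg.sub hp).hasDerivWithinAt (s := Iio t)
  rw [hasDerivWithinAt_iff_tendsto_slope' (by simp)] at hd
  have : 0 ≤ a - b := by
    refine ge_of_tendsto hd ?_
    filter_upwards [Ioo_mem_nhdsLT ht] with s hs
    have h1 := hle s ⟨hs.1.le, hs.2.le⟩
    rw [slope_def_field]
    apply div_nonneg_of_nonpos
    · simp only [Pi.sub_apply]; linarith
    · linarith [hs.2]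
  linarith

lemma iteratedDeriv_two_nonpos_of_isLocalMax {h : ℝ → ℝ} {a : ℝ} (hc : ContinuousAt h a)
    (hm : IsLocalMax h a) : iteratedDeriv 2 h a ≤ 0 := by
  rw [iteratedDeriv_succ, iteratedDeriv_one]
  by_contra! hpos
  have hmin := isLocalMin_of_deriv_deriv_pos hpos hm.deriv_eq_zero hc
  -- a point that is both a local maximum and a local minimum has a locally constant germ
  have hconst : h =ᶠ[𝓝 a] fun _ => h a := by
    filter_upwards [hm, hmin] with s h1 h2 using le_antisymm h1 h2
  have h2 := hconst.deriv.deriv_eq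
  simp at h2
  linarith

lemma contDiffAt_line {n : ℕ} {f : EuclideanSpace ℝ (Fin n) → ℝ}
    {x : EuclideanSpace ℝ (Fin n)} (hf : ContDiffAt ℝ 2 f x) (e : EuclideanSpace ℝ (Fin n)) :
    ContDiffAt ℝ 2 (fun s : ℝ => f (x + s • e)) 0 := by
  refine ContDiffAt.comp (g := f) (f := fun s : ℝ => x + s • e) 0 (by simpa using hf) ?_
  fun_prop

lemma lap_le_of_isLocalMax {n : ℕ} {g p : EuclideanSpace ℝ (Fin n) → ℝ}
    {x : EuclideanSpace ℝ (Fin n)} (hg : ContDiffAt ℝ 2 g x) (hp : ContDiffAt ℝ 2 p x)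
    (hm : IsLocalMax (fun y => g y - p y) x) : lap g x ≤ lap p x := by
  refine Finset.sum_le_sum fun i _ => ?_
  set e := EuclideanSpace.single i (1 : ℝ)
  have h1 := contDiffAt_line hg e
  have h2 := contDiffAt_line hp e
  have h3 : iteratedDeriv 2 ((fun s : ℝ => g (x + s • e)) - (fun s : ℝ => p (x + s • e))) 0 ≤ 0 := by
    refine iteratedDeriv_two_nonpos_of_isLocalMax (h1.continuousAt.sub h2.continuousAt) ?_
    have hc : Tendsto (fun s : ℝ => x + s • e) (𝓝 0) (𝓝 x) := by
      have : Continuous (fun s : ℝ => x + s • e) := by fun_prop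
      simpa using this.tendsto 0
    have := hc.eventually hm
    simpa [IsLocalMax, IsMaxFilter] using this
  rw [iteratedDeriv_sub h1 h2] at h3
  linarith

lemma lap_add {n : ℕ} {g p : EuclideanSpace ℝ (Fin n) → ℝ}
    {x : EuclideanSpace ℝ (Fin n)} (hg : ContDiffAt ℝ 2 g x) (hp : ContDiffAt ℝ 2 p x) :
    lap (fun y => g y + p y) x = lap g x + lap p x := by
  unfold lap
  rw [← Finset.sum_add_distrib]
  refine Finset.sum_congr rfl fun i _ => ?_
  exact iteratedDeriv_add (contDiffAt_line hg _) (contDiffAt_line hp _)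

lemma lap_const {n : ℕ} (c : ℝ) (x : EuclideanSpace ℝ (Fin n)) :
    lap (fun _ => c) x = 0 := by
  simp [lap, iteratedDeriv_succ]

lemma lap_const_mul {n : ℕ} {g : EuclideanSpace ℝ (Fin n) → ℝ}
    {x : EuclideanSpace ℝ (Fin n)} (c : ℝ) :
    lap (fun y => c * g y) x = c * lap g x := by
  unfold lap
  rw [Finset.mul_sum]
  refine Finset.sum_congr rfl fun i _ => ?_
  exact iteratedDeriv_const_mul_field c _

lemma iteratedDeriv_two_line {n : ℕ} {f : EuclideanSpace ℝ (Fin n) → ℝ}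
    {x : EuclideanSpace ℝ (Fin n)} (hf : ContDiffAt ℝ 2 f x) (e : EuclideanSpace ℝ (Fin n)) :
    iteratedDeriv 2 (fun s : ℝ => f (x + s • e)) 0 = iteratedFDeriv ℝ 2 f x ![e, e] := by
  have hline : ∀ s : ℝ, HasDerivAt (fun s : ℝ => x + s • e) e s := fun s => by
    simpa using ((hasDerivAt_id s).smul_const e).const_add x
  have hc : Tendsto (fun s : ℝ => x + s • e) (𝓝 0) (𝓝 x) := by
    simpa using (hline 0).continuousAt.tendsto
  have h1 : deriv (fun s : ℝ => f (x + s • e)) =ᶠ[𝓝 0] fun s => fderiv ℝ f (x + s • e) e := by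
    have hev : ∀ᶠ y in 𝓝 x, DifferentiableAt ℝ f y := by
      filter_upwards [hf.eventually (by simp)] with y hy using hy.differentiableAt (by simp)
    filter_upwards [hc.eventually hev] with s hs
    exact (hs.hasFDerivAt.comp_hasDerivAt s (hline s)).deriv
  rw [iteratedDeriv_succ, iteratedDeriv_one, h1.deriv_eq, iteratedFDeriv_two_apply]
  have hd : DifferentiableAt ℝ (fderiv ℝ f) (x + (0 : ℝ) • e) := by
    simpa using (hf.fderiv_right (m := 1) (by norm_num)).differentiableAt (by simp)
  have h2 : HasDerivAt (fun s : ℝ => fderiv ℝ f (x + s • e))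
      (fderiv ℝ (fderiv ℝ f) (x + (0 : ℝ) • e) e) 0 :=
    hd.hasFDerivAt.comp_hasDerivAt (0 : ℝ) (hline 0)
  have h3 : HasDerivAt (fun s : ℝ => fderiv ℝ f (x + s • e) e)
      (fderiv ℝ (fderiv ℝ f) (x + (0 : ℝ) • e) e e) 0 :=
    (ContinuousLinearMap.apply ℝ ℝ e).hasFDerivAt.comp_hasDerivAt (0 : ℝ) h2
  rw [h3.deriv, zero_smul, add_zero]
  rfl

/-- The Laplacian commutes with linear isometries. -/
lemma lap_comp_isometry {n : ℕ} {f : EuclideanSpace ℝ (Fin n) → ℝ}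
    {x : EuclideanSpace ℝ (Fin n)}
    (Q : EuclideanSpace ℝ (Fin n) ≃ₗᵢ[ℝ] EuclideanSpace ℝ (Fin n))
    (hf : ContDiffAt ℝ 2 f (Q x)) : lap (fun y => f (Q y)) x = lap f (Q x) := by
  have h1 := congrFun (InnerProductSpace.laplacian_eq_iteratedFDeriv_orthonormalBasis f
    (EuclideanSpace.basisFun (Fin n) ℝ)) (Q x)
  have h2 := congrFun (InnerProductSpace.laplacian_eq_iteratedFDeriv_orthonormalBasis f
    ((EuclideanSpace.basisFun (Fin n) ℝ).map Q)) (Q x)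
  unfold lap
  simp only [map_add, map_smul, iteratedDeriv_two_line hf]
  simp only [OrthonormalBasis.map_apply, EuclideanSpace.basisFun_apply] at h1 h2
  rw [← h1, ← h2]

/-! ### The exponential weight `exp (k‖x‖²)` -/

lemma contDiff_expWeight {n : ℕ} (k : ℝ) :
    ContDiff ℝ 2 (fun y : EuclideanSpace ℝ (Fin n) => Real.exp (k * ‖y‖ ^ 2)) := by
  exact Real.contDiff_exp.comp (contDiff_const.mul (contDiff_norm_sq ℝ))

lemma lap_expWeight {n : ℕ} (k : ℝ) (x : EuclideanSpace ℝ (Fin n)) :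
    lap (fun y => Real.exp (k * ‖y‖ ^ 2)) x
      = (4 * k ^ 2 * ‖x‖ ^ 2 + 2 * k * n) * Real.exp (k * ‖x‖ ^ 2) := by
  have key : ∀ i : Fin n, iteratedDeriv 2 (fun s : ℝ =>
      Real.exp (k * ‖x + s • EuclideanSpace.single i (1 : ℝ)‖ ^ 2)) 0
      = (4 * k ^ 2 * (x i) ^ 2 + 2 * k) * Real.exp (k * ‖x‖ ^ 2) := by
    intro i
    have e1 : (fun s : ℝ => Real.exp (k * ‖x + s • EuclideanSpace.single i (1 : ℝ)‖ ^ 2))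
        = fun s : ℝ => Real.exp (k * (‖x‖ ^ 2 + 2 * (s * x i) + s ^ 2)) := by
      funext s
      rw [norm_add_sq_real, norm_smul, inner_smul_right]
      simp [EuclideanSpace.inner_single_right]
    have d1 : ∀ s : ℝ, HasDerivAt (fun s : ℝ => Real.exp (k * (‖x‖ ^ 2 + 2 * (s * x i) + s ^ 2)))
        (Real.exp (k * (‖x‖ ^ 2 + 2 * (s * x i) + s ^ 2)) * (k * (2 * x i + 2 * s))) s := by
      intro s
      have h : HasDerivAt (fun s : ℝ => ‖x‖ ^ 2 + 2 * (s * x i) + s ^ 2) (2 * x i + 2 * s) s := by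
        simpa using ((((hasDerivAt_id' s).mul_const (x i)).const_mul 2).const_add (‖x‖ ^ 2)).fun_add
          (hasDerivAt_pow 2 s)
      exact (h.const_mul k).exp
    have d2 : HasDerivAt (fun s : ℝ => Real.exp (k * (‖x‖ ^ 2 + 2 * (s * x i) + s ^ 2))
        * (k * (2 * x i + 2 * s))) ((4 * k ^ 2 * (x i) ^ 2 + 2 * k) * Real.exp (k * ‖x‖ ^ 2)) 0 := by
      have h := (d1 0).fun_mul
        ((((hasDerivAt_id' (0 : ℝ)).const_mul 2).const_add (2 * x i)).const_mul k)
      refine h.congr_deriv ?_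
      simp only [zero_mul, mul_zero, add_zero, mul_one, ne_eq, OfNat.ofNat_ne_zero,
        not_false_eq_true, zero_pow]
      ring
    rw [e1, iteratedDeriv_succ, iteratedDeriv_one, funext fun s => (d1 s).deriv, d2.deriv]
  unfold lap
  rw [Finset.sum_congr rfl fun i _ => key i, ← Finset.sum_mul, EuclideanSpace.norm_sq_eq]
  congr 1
  simp [Finset.sum_add_distrib, Finset.mul_sum]
  ring

lemma hasDerivAt_expWeight_normal {n : ℕ} {R : ℝ} (hR : 0 < R) (k : ℝ)
    {x : EuclideanSpace ℝ (Fin n)} (hx : ‖x‖ = R) :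
    HasDerivAt (fun s : ℝ => Real.exp (k * ‖x + s • (R⁻¹ • x)‖ ^ 2))
      (2 * k * R * Real.exp (k * R ^ 2)) 0 := by
  have e1 : (fun s : ℝ => Real.exp (k * ‖x + s • (R⁻¹ • x)‖ ^ 2))
      = fun s : ℝ => Real.exp (k * (R + s) ^ 2) := by
    funext s
    have : x + s • (R⁻¹ • x) = (1 + s * R⁻¹) • x := by rw [add_smul, one_smul, mul_smul]
    rw [this, norm_smul, hx, mul_pow, Real.norm_eq_abs, sq_abs, ← mul_pow]
    congr 3
    field_simp
  rw [e1]
  have h := ((((hasDerivAt_id' (0 : ℝ)).const_add R).fun_pow 2).const_mul k).exp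
  refine h.congr_deriv ?_
  simp only [add_zero, mul_one, Nat.cast_ofNat, Nat.add_one_sub_one, pow_one]
  ring

/-! ### First contact principle -/

/-- If continuous functions `f i` on `K × [a, b]` start strictly negative and no first contact with
zero is possible, they stay strictly negative. -/
lemma first_touch {ι X : Type*} [Finite ι] [TopologicalSpace X] [T2Space X] {K : Set X}
    (hK : IsCompact K) {a b : ℝ} (f : ι → X → ℝ → ℝ)
    (hc : ∀ i, ContinuousOn (fun p : X × ℝ => f i p.1 p.2) (K ×ˢ Icc a b))
    (h0 : ∀ i, ∀ x ∈ K, f i x a < 0)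
    (ht : ∀ i, ∀ x ∈ K, ∀ t ∈ Ioc a b, f i x t = 0 →
      (∀ j, ∀ y ∈ K, ∀ s ∈ Icc a t, f j y s ≤ 0) → False) :
    ∀ i, ∀ x ∈ K, ∀ t ∈ Icc a b, f i x t < 0 := by
  by_contra! hcon
  obtain ⟨i₀, x₀, hx₀, t₀, ht₀, hpos⟩ := hcon
  have hcpt : IsCompact (K ×ˢ Icc a b) := hK.prod isCompact_Icc
  set A : Set ℝ := ⋃ i, Prod.snd '' ((K ×ˢ Icc a b) ∩ (fun p : X × ℝ => f i p.1 p.2) ⁻¹' Ici 0)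
  have hA : IsCompact A := by
    refine isCompact_iUnion fun i => IsCompact.image ?_ continuous_snd
    exact hcpt.of_isClosed_subset ((hc i).preimage_isClosed_of_isClosed hcpt.isClosed isClosed_Ici)
      inter_subset_left
  have memA : ∀ {i x t}, x ∈ K → t ∈ Icc a b → 0 ≤ f i x t → t ∈ A := fun {i x t} hx ht h =>
    mem_iUnion.2 ⟨i, (x, t), ⟨⟨hx, ht⟩, h⟩, rfl⟩
  obtain ⟨τ, hτA, hτ⟩ := hA.exists_isLeast ⟨t₀, memA hx₀ ht₀ hpos⟩
  obtain ⟨i, hi⟩ := mem_iUnion.1 hτA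
  obtain ⟨⟨x, τ'⟩, ⟨⟨hx, hτI⟩, hf⟩, rfl⟩ := hi
  simp only [mem_preimage, mem_Ici] at hf hx hτI hτ hτA
  have haτ : a < τ' := by
    rcases hτI.1.lt_or_eq with h | h
    · exact h
    · have := h0 i x hx
      rw [h] at this
      linarith
  have hlt : ∀ j, ∀ y ∈ K, ∀ s ∈ Ico a τ', f j y s < 0 := by
    intro j y hy s hs
    by_contra! h
    exact absurd (hτ (memA hy ⟨hs.1, hs.2.le.trans hτI.2⟩ h)) (not_le.2 hs.2)
  have hle : ∀ j, ∀ y ∈ K, f j y τ' ≤ 0 := by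
    intro j y hy
    have hcy : ContinuousOn (fun s => f j y s) (Icc a b) :=
      (hc j).comp (f := fun s => (y, s)) (by fun_prop) fun s hs => ⟨hy, hs⟩
    have h1 : Tendsto (fun s => f j y s) (𝓝[Ico a τ'] τ') (𝓝 (f j y τ')) :=
      (hcy τ' hτI).mono fun s hs => ⟨hs.1, hs.2.le.trans hτI.2⟩
    have : (𝓝[Ico a τ'] τ').NeBot := by
      rw [← mem_closure_iff_nhdsWithin_neBot, closure_Ico haτ.ne]
      exact ⟨haτ.le, le_rfl⟩
    refine le_of_tendsto h1 ?_
    filter_upwards [self_mem_nhdsWithin] with s hs using (hlt j y hy s hs).le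
  refine ht i x hx τ' ⟨haτ, hτI.2⟩ (le_antisymm (hle i x hx) hf) ?_
  intro j y hy s hs
  rcases hs.2.lt_or_eq with h | h
  · exact (hlt j y hy s ⟨hs.1, h⟩).le
  · exact h ▸ hle j y hy

/-! ### The system in symmetric form -/

/-- The pair of solutions as one family indexed by `Bool`, with the regularity in the form used by
the contact arguments.  The partner of the component `i` is `!i`, so the system reads
`∂ₜ wᵢ = Δ wᵢ + λ exp w_{!i}` with `∂wᵢ/∂η = exp w_{!i}` on the sphere. -/
structure SymSol (n : ℕ) (R T lam : ℝ) (w : Bool → EuclideanSpace ℝ (Fin n) → ℝ → ℝ) :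
    Prop where
  cont : ∀ i, ContinuousOn (fun p : EuclideanSpace ℝ (Fin n) × ℝ => w i p.1 p.2)
    ((closedBall (0 : EuclideanSpace ℝ (Fin n)) R) ×ˢ Ico (0 : ℝ) T)
  reg : ∀ i, ∀ t ∈ Ioo (0 : ℝ) T, ∀ x : EuclideanSpace ℝ (Fin n), ‖x‖ < R →
    ContDiffAt ℝ 2 (fun y => w i y t) x
  time : ∀ i, ∀ t ∈ Ioo (0 : ℝ) T, ∀ x : EuclideanSpace ℝ (Fin n), ‖x‖ ≤ R →
    HasDerivAt (w i x) (deriv (w i x) t) t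
  pde : ∀ i, ∀ t ∈ Ioo (0 : ℝ) T, ∀ x : EuclideanSpace ℝ (Fin n), ‖x‖ < R →
    deriv (w i x) t = lap (fun y => w i y t) x + lam * Real.exp (w (!i) x t)
  bc : ∀ i, ∀ t ∈ Ioo (0 : ℝ) T, ∀ x : EuclideanSpace ℝ (Fin n), ‖x‖ = R →
    HasDerivAt (fun s : ℝ => w i (x + s • (R⁻¹ • x)) t) (Real.exp (w (!i) x t)) 0

/-- The normal derivative equals an exponential, hence is nonzero, so it is a genuine two-sided
derivative and not the junk value of `deriv`. -/
lemma hasDerivAt_of_normalDeriv {n : ℕ} {R a : ℝ} {f : EuclideanSpace ℝ (Fin n) → ℝ}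
    {x : EuclideanSpace ℝ (Fin n)} (h : normalDeriv R f x = Real.exp a) :
    HasDerivAt (fun s : ℝ => f (x + s • (R⁻¹ • x))) (Real.exp a) 0 := by
  have hne : deriv (fun s : ℝ => f (x + s • (R⁻¹ • x))) 0 ≠ 0 := by
    unfold normalDeriv at h
    rw [h]
    exact (Real.exp_pos a).ne'
  have hd := (differentiableAt_of_deriv_ne_zero hne).hasDerivAt
  unfold normalDeriv at h
  rwa [h] at hd

lemma IsClassicalSolution.symSol {n : ℕ} {R T lam : ℝ}
    {u v : EuclideanSpace ℝ (Fin n) → ℝ → ℝ} {u₀ v₀ : EuclideanSpace ℝ (Fin n) → ℝ}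
    (hsol : IsClassicalSolution n R T lam lam u v u₀ v₀) :
    SymSol n R T lam (fun b => bif b then u else v) where
  cont i := by cases i; exacts [hsol.cont_v, hsol.cont_u]
  reg i t ht x hx := by
    have hn : closedBall (0 : EuclideanSpace ℝ (Fin n)) R ∈ 𝓝 x :=
      closedBall_mem_nhds_of_mem (by simpa using hx)
    cases i
    exacts [(hsol.reg_space_v t ht).contDiffAt hn, (hsol.reg_space_u t ht).contDiffAt hn]
  time i t ht x hx := by
    have hx' : x ∈ closedBall (0 : EuclideanSpace ℝ (Fin n)) R := by simpa using hx
    cases i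
    exacts [(hsol.reg_time_v x hx' t ht).hasDerivAt, (hsol.reg_time_u x hx' t ht).hasDerivAt]
  pde i t ht x hx := by
    have hx' : x ∈ ball (0 : EuclideanSpace ℝ (Fin n)) R := by simpa using hx
    cases i
    exacts [hsol.pde_v x hx' t ht, hsol.pde_u x hx' t ht]
  bc i t ht x hx := by
    cases i
    exacts [hasDerivAt_of_normalDeriv (hsol.bc_v x hx t ht),
      hasDerivAt_of_normalDeriv (hsol.bc_u x hx t ht)]

lemma norm_radial_move {n : ℕ} {R s : ℝ} (hR : 0 < R) {x : EuclideanSpace ℝ (Fin n)}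
    (hx : ‖x‖ = R) (hs : -R ≤ s) : ‖x + s • (R⁻¹ • x)‖ = R + s := by
  have : x + s • (R⁻¹ • x) = (1 + s * R⁻¹) • x := by rw [add_smul, one_smul, mul_smul]
  rw [this, norm_smul, hx, Real.norm_eq_abs]
  have h2 : (1 + s * R⁻¹) * R = R + s := by field_simp
  rw [← h2, abs_of_nonneg]
  have : 0 ≤ (R + s) * R⁻¹ := mul_nonneg (by linarith) (inv_nonneg.2 hR.le)
  have h3 : (R + s) * R⁻¹ = 1 + s * R⁻¹ := by field_simp
  linarith

lemma exp_sub_exp_le {a b d N : ℝ} (ha : a ≤ N) (hab : a - b ≤ d) (hd : 0 ≤ d) :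
    Real.exp a - Real.exp b ≤ Real.exp N * d := by
  have h1 : Real.exp b = Real.exp a * Real.exp (b - a) := by rw [← Real.exp_add]; ring_nf
  have h2 := Real.add_one_le_exp (b - a)
  have h3 := Real.exp_pos a
  have h4 : Real.exp a ≤ Real.exp N := Real.exp_le_exp.2 ha
  calc Real.exp a - Real.exp b ≤ Real.exp a * (a - b) := by rw [h1]; nlinarith
    _ ≤ Real.exp a * d := by gcongr
    _ ≤ Real.exp N * d := by gcongr

namespace SymSol

variable {n : ℕ} {R T lam : ℝ} {w : Bool → EuclideanSpace ℝ (Fin n) → ℝ → ℝ}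

lemma contOn (h : SymSol n R T lam w) (i : Bool) {a b : ℝ} (ha : 0 ≤ a) (hb : b < T) :
    ContinuousOn (fun p : EuclideanSpace ℝ (Fin n) × ℝ => w i p.1 p.2)
      (closedBall (0 : EuclideanSpace ℝ (Fin n)) R ×ˢ Icc a b) :=
  (h.cont i).mono (prod_mono le_rfl fun _ hs => ⟨ha.trans hs.1, hs.2.trans_lt hb⟩)

lemma exists_bound (h : SymSol n R T lam w) {b : ℝ} (hb : b < T) :
    ∃ N : ℝ, ∀ i, ∀ x : EuclideanSpace ℝ (Fin n), ‖x‖ ≤ R → ∀ t ∈ Icc 0 b, w i x t ≤ N := by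
  have hc : IsCompact (closedBall (0 : EuclideanSpace ℝ (Fin n)) R ×ˢ Icc 0 b) :=
    (isCompact_closedBall _ _).prod isCompact_Icc
  obtain ⟨N₁, h₁⟩ := hc.exists_bound_of_continuousOn (h.contOn true le_rfl hb)
  obtain ⟨N₂, h₂⟩ := hc.exists_bound_of_continuousOn (h.contOn false le_rfl hb)
  refine ⟨max N₁ N₂, fun i x hx t ht => ?_⟩
  cases i
  · exact (le_abs_self _).trans ((h₂ (x, t) ⟨by simpa using hx, ht⟩).trans (le_max_right _ _))
  · exact (le_abs_self _).trans ((h₁ (x, t) ⟨by simpa using hx, ht⟩).trans (le_max_left _ _))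

/-! ### Lower bound and comparison of the two components -/

lemma gt_neg_one (hR : 0 < R) (hlam : 0 < lam) (h : SymSol n R T lam w)
    (h0 : ∀ i, ∀ x : EuclideanSpace ℝ (Fin n), ‖x‖ ≤ R → 0 ≤ w i x 0)
    (i : Bool) (x : EuclideanSpace ℝ (Fin n)) (hx : ‖x‖ ≤ R) {t : ℝ} (ht : t ∈ Ico 0 T) :
    -1 < w i x t := by
  have key := first_touch (isCompact_closedBall (0 : EuclideanSpace ℝ (Fin n)) R)
    (a := 0) (b := t) (fun i x t => -1 - w i x t)
    (fun i => continuousOn_const.sub (h.contOn i le_rfl ht.2)) ?_ ?_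
    i x (by simpa using hx) t ⟨ht.1, le_rfl⟩
  · linarith
  · intro i x hx
    have := h0 i x (by simpa using hx)
    linarith
  · intro i x hx s hs heq hle
    have hx : ‖x‖ ≤ R := by simpa using hx
    have hsT : s ∈ Ioo 0 T := ⟨hs.1, hs.2.trans_lt ht.2⟩
    have hE := Real.exp_pos (w (!i) x s)
    rcases hx.lt_or_eq with hlt | hxR
    · have h1 := deriv_le_of_touch hs.1 (hasDerivAt_const s (-1 : ℝ)) (h.time i s hsT x hx)
        (fun r hr => by linarith [hle i x (by simpa using hx) r hr]) (by linarith)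
      have h2 := lap_le_of_isLocalMax (contDiffAt_const (c := (-1 : ℝ))) (h.reg i s hsT x hlt) (by
        filter_upwards [isOpen_ball.mem_nhds (show x ∈ ball 0 R by simpa using hlt)] with y hy
        have := hle i y (ball_subset_closedBall hy) s ⟨hs.1.le, le_rfl⟩
        linarith)
      rw [lap_const] at h2
      rw [h.pde i s hsT x hlt] at h1
      nlinarith
    · have h1 := deriv_le_of_touch (t₀ := -R) (by linarith) (hasDerivAt_const (0 : ℝ) (-1 : ℝ))
        (h.bc i s hsT x hxR)
        (fun r hr => by
          have := norm_radial_move hR hxR hr.1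
          have := hle i (x + r • (R⁻¹ • x)) (by
            simp only [mem_closedBall, dist_zero_right]; linarith [hr.2]) s ⟨hs.1.le, le_rfl⟩
          linarith) (by simp; linarith)
      linarith

/-- The components differ by at most a constant: at a first contact `wᵢ > w_{!i}`, so both the
reaction term and the flux of `wᵢ - w_{!i}` are negative there. -/
lemma sub_lt (hR : 0 < R) (hlam : 0 < lam) (h : SymSol n R T lam w) {K : ℝ} (hK : 0 < K)
    (h0 : ∀ i, ∀ x : EuclideanSpace ℝ (Fin n), ‖x‖ ≤ R → w i x 0 - w (!i) x 0 < K)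
    (i : Bool) (x : EuclideanSpace ℝ (Fin n)) (hx : ‖x‖ ≤ R) {t : ℝ} (ht : t ∈ Ico 0 T) :
    w i x t < w (!i) x t + K := by
  have key := first_touch (isCompact_closedBall (0 : EuclideanSpace ℝ (Fin n)) R)
    (a := 0) (b := t) (fun i x t => w i x t - (w (!i) x t + K))
    (fun i => (h.contOn i le_rfl ht.2).sub
      ((h.contOn (!i) le_rfl ht.2).add continuousOn_const)) ?_ ?_
    i x (by simpa using hx) t ⟨ht.1, le_rfl⟩
  · linarith
  · intro i x hx
    have := h0 i x (by simpa using hx)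
    linarith
  · intro i x hx s hs heq hle
    have hx : ‖x‖ ≤ R := by simpa using hx
    have hsT : s ∈ Ioo 0 T := ⟨hs.1, hs.2.trans_lt ht.2⟩
    have hE : Real.exp (w (!i) x s) < Real.exp (w (!!i) x s) := by
      rw [Bool.not_not]
      exact Real.exp_lt_exp.2 (by linarith)
    rcases hx.lt_or_eq with hlt | hxR
    · have h1 := deriv_le_of_touch hs.1 (h.time i s hsT x hx)
        ((h.time (!i) s hsT x hx).add_const K)
        (fun r hr => by linarith [hle i x (by simpa using hx) r hr]) (by linarith)
      have h2 := lap_le_of_isLocalMax (h.reg i s hsT x hlt)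
        ((h.reg (!i) s hsT x hlt).add (contDiffAt_const (c := K))) (by
        filter_upwards [isOpen_ball.mem_nhds (show x ∈ ball 0 R by simpa using hlt)] with y hy
        have := hle i y (ball_subset_closedBall hy) s ⟨hs.1.le, le_rfl⟩
        linarith)
      rw [lap_add (h.reg (!i) s hsT x hlt) contDiffAt_const, lap_const] at h2
      rw [h.pde i s hsT x hlt, h.pde (!i) s hsT x hlt] at h1
      nlinarith
    · have h1 := deriv_le_of_touch (t₀ := -R) (by linarith) (h.bc i s hsT x hxR)
        ((h.bc (!i) s hsT x hxR).add_const K)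
        (fun r hr => by
          have := norm_radial_move hR hxR hr.1
          have := hle i (x + r • (R⁻¹ • x)) (by
            simp only [mem_closedBall, dist_zero_right]; linarith [hr.2]) s ⟨hs.1.le, le_rfl⟩
          linarith) (by simp only [zero_smul, add_zero]; linarith)
      linarith

/-! ### Radial symmetry and radial monotonicity -/

/-- Comparison of the solution with its composition with a linear isometry `Q`: the difference
stays below `ε exp (L t) exp (k‖x‖²)`, where `k` makes the flux of the weight dominate on the
sphere and `L` makes its growth dominate inside. -/
lemma le_comp_isometry (hR : 0 < R) (hlam : 0 < lam) (h : SymSol n R T lam w)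
    (Q : EuclideanSpace ℝ (Fin n) ≃ₗᵢ[ℝ] EuclideanSpace ℝ (Fin n))
    (h0 : ∀ i, ∀ x : EuclideanSpace ℝ (Fin n), ‖x‖ ≤ R → w i x 0 ≤ w i (Q x) 0)
    (i : Bool) (x : EuclideanSpace ℝ (Fin n)) (hx : ‖x‖ ≤ R) {t : ℝ} (ht : t ∈ Ico 0 T) :
    w i x t ≤ w i (Q x) t := by
  obtain ⟨N, hN⟩ := h.exists_bound ht.2
  set C := Real.exp N with hC
  have hCpos : 0 < C := Real.exp_pos N
  set k := C / R with hk
  have hkpos : 0 < k := div_pos hCpos hR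
  have hkR : k * R = C := by rw [hk]; field_simp
  set L := 4 * k ^ 2 * R ^ 2 + 2 * k * n + lam * C + 1 with hL
  suffices H : ∀ ε > 0, w i x t - (w i (Q x) t + ε * Real.exp (L * t) * Real.exp (k * ‖x‖ ^ 2)) < 0 by
    refine le_of_forall_pos_le_add fun δ hδ => ?_
    have := H (δ / (Real.exp (L * t) * Real.exp (k * ‖x‖ ^ 2))) (by positivity)
    have e : δ / (Real.exp (L * t) * Real.exp (k * ‖x‖ ^ 2)) * Real.exp (L * t)
        * Real.exp (k * ‖x‖ ^ 2) = δ := by field_simp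
    rw [e] at this
    linarith
  intro ε hε
  have hcQ : ∀ i, ContinuousOn (fun p : EuclideanSpace ℝ (Fin n) × ℝ => w i (Q p.1) p.2)
      (closedBall (0 : EuclideanSpace ℝ (Fin n)) R ×ˢ Icc 0 t) := fun i =>
    (h.contOn i le_rfl ht.2).comp (f := fun p : EuclideanSpace ℝ (Fin n) × ℝ => (Q p.1, p.2))
      (by fun_prop) fun p hp => ⟨by simpa using hp.1, hp.2⟩
  refine first_touch (isCompact_closedBall (0 : EuclideanSpace ℝ (Fin n)) R)
    (a := 0) (b := t)
    (fun i x t => w i x t - (w i (Q x) t + ε * Real.exp (L * t) * Real.exp (k * ‖x‖ ^ 2)))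
    (fun i => (h.contOn i le_rfl ht.2).sub ((hcQ i).add (by fun_prop))) ?_ ?_
    i x (by simpa using hx) t ⟨ht.1, le_rfl⟩
  · intro i x hx
    have := h0 i x (by simpa using hx)
    have : 0 < ε * Real.exp (L * 0) * Real.exp (k * ‖x‖ ^ 2) := by positivity
    linarith
  · intro i x hx s hs heq hle
    have hx : ‖x‖ ≤ R := by simpa using hx
    have hQx : ‖Q x‖ = ‖x‖ := Q.norm_map x
    have hsT : s ∈ Ioo 0 T := ⟨hs.1, hs.2.trans_lt ht.2⟩
    have hSpos : 0 < ε * Real.exp (L * s) * Real.exp (k * ‖x‖ ^ 2) := by positivity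
    have hE : Real.exp (w (!i) x s) - Real.exp (w (!i) (Q x) s)
        ≤ C * (ε * Real.exp (L * s) * Real.exp (k * ‖x‖ ^ 2)) :=
      exp_sub_exp_le (hN (!i) x hx s ⟨hs.1.le, hs.2⟩)
        (by linarith [hle (!i) x (by simpa using hx) s ⟨hs.1.le, le_rfl⟩]) hSpos.le
    rcases hx.lt_or_eq with hlt | hxR
    · have hQlt : ‖Q x‖ < R := by rwa [hQx]
      have d1 : HasDerivAt (fun r => ε * Real.exp (L * r) * Real.exp (k * ‖x‖ ^ 2))
          (L * (ε * Real.exp (L * s) * Real.exp (k * ‖x‖ ^ 2))) s := by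
        refine (((((hasDerivAt_id' s).const_mul L).exp).const_mul ε).mul_const _).congr_deriv ?_
        ring
      have h1 := deriv_le_of_touch hs.1 (h.time i s hsT x hx)
        ((h.time i s hsT (Q x) hQlt.le).fun_add d1)
        (fun r hr => by linarith [hle i x (by simpa using hx) r hr]) (by linarith)
      have c1 : ContDiffAt ℝ 2 (fun y => w i (Q y) s) x :=
        (h.reg i s hsT (Q x) hQlt).comp x Q.contDiff.contDiffAt
      have c2 : ContDiffAt ℝ 2 (fun y : EuclideanSpace ℝ (Fin n) =>
          ε * Real.exp (L * s) * Real.exp (k * ‖y‖ ^ 2)) x :=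
        contDiffAt_const.mul (contDiff_expWeight k).contDiffAt
      have h2 := lap_le_of_isLocalMax (h.reg i s hsT x hlt) (c1.add c2) (by
        filter_upwards [isOpen_ball.mem_nhds (show x ∈ ball 0 R by simpa using hlt)] with y hy
        have := hle i y (ball_subset_closedBall hy) s ⟨hs.1.le, le_rfl⟩
        linarith)
      rw [lap_add c1 c2, lap_const_mul, lap_expWeight,
        lap_comp_isometry Q (h.reg i s hsT (Q x) hQlt)] at h2
      rw [h.pde i s hsT x hlt, h.pde i s hsT (Q x) hQlt] at h1
      set S := ε * Real.exp (L * s) * Real.exp (k * ‖x‖ ^ 2) with hS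
      have h3 : ε * Real.exp (L * s) * ((4 * k ^ 2 * ‖x‖ ^ 2 + 2 * k * n)
          * Real.exp (k * ‖x‖ ^ 2)) ≤ (4 * k ^ 2 * R ^ 2 + 2 * k * n) * S := by
        have : ε * Real.exp (L * s) * ((4 * k ^ 2 * ‖x‖ ^ 2 + 2 * k * n)
          * Real.exp (k * ‖x‖ ^ 2)) = (4 * k ^ 2 * ‖x‖ ^ 2 + 2 * k * n) * S := by rw [hS]; ring
        rw [this]
        gcongr
      have h4 := mul_le_mul_of_nonneg_left hE hlam.le
      rw [hL] at h1
      nlinarith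
    · have hQR : ‖Q x‖ = R := by rwa [hQx]
      have d1 := (h.bc i s hsT (Q x) hQR).fun_add
        ((hasDerivAt_expWeight_normal hR k hxR).const_mul (ε * Real.exp (L * s)))
      have h1 := deriv_le_of_touch (t₀ := -R) (by linarith) (h.bc i s hsT x hxR) d1
        (fun r hr => by
          have := norm_radial_move hR hxR hr.1
          have := hle i (x + r • (R⁻¹ • x)) (by
            simp only [mem_closedBall, dist_zero_right]; linarith [hr.2]) s ⟨hs.1.le, le_rfl⟩
          simp only [map_add, map_smul] at this
          linarith) (by simp only [zero_smul, add_zero]; linarith)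
      rw [hxR] at hE hSpos
      have h3 : ε * Real.exp (L * s) * (2 * k * R * Real.exp (k * R ^ 2))
          = 2 * (C * (ε * Real.exp (L * s) * Real.exp (k * R ^ 2))) := by rw [← hkR]; ring
      rw [h3] at h1
      have := mul_pos hCpos hSpos
      linarith

lemma le_of_norm_eq (hR : 0 < R) (hlam : 0 < lam) (h : SymSol n R T lam w)
    (h0 : ∀ i, ∀ x y : EuclideanSpace ℝ (Fin n), ‖x‖ ≤ R → ‖y‖ ≤ R → ‖x‖ ≤ ‖y‖ →
      w i x 0 ≤ w i y 0)
    (i : Bool) {x y : EuclideanSpace ℝ (Fin n)} (hxy : ‖x‖ = ‖y‖) (hx : ‖x‖ ≤ R)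
    {t : ℝ} (ht : t ∈ Ico 0 T) : w i x t ≤ w i y t := by
  have := h.le_comp_isometry hR hlam (Submodule.reflection (Submodule.span ℝ {x - y})ᗮ)
    (fun i z hz => h0 i z _ hz (by simpa using hz) (by simp)) i x hx ht
  rwa [Submodule.reflection_sub hxy] at this

/-- Radial monotonicity, by doubling the variables: `w i x t - w i y t` is estimated on
`‖x‖ ≤ ‖y‖ ≤ R`.  A positive contact value cannot occur on `‖x‖ = ‖y‖` by radial symmetry, nor on
`‖y‖ = R` because the flux is positive. -/
lemma le_of_norm_le (hR : 0 < R) (hlam : 0 < lam) (h : SymSol n R T lam w)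
    (h0 : ∀ i, ∀ x y : EuclideanSpace ℝ (Fin n), ‖x‖ ≤ R → ‖y‖ ≤ R → ‖x‖ ≤ ‖y‖ →
      w i x 0 ≤ w i y 0)
    (i : Bool) {x y : EuclideanSpace ℝ (Fin n)} (hxy : ‖x‖ ≤ ‖y‖) (hy : ‖y‖ ≤ R)
    {t : ℝ} (ht : t ∈ Ico 0 T) : w i x t ≤ w i y t := by
  obtain ⟨N, hN⟩ := h.exists_bound ht.2
  set C := Real.exp N with hC
  have hCpos : 0 < C := Real.exp_pos N
  set L := lam * C + 1 with hL
  suffices H : ∀ ε > 0, w i x t - (w i y t + ε * Real.exp (L * t)) < 0 by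
    refine le_of_forall_pos_le_add fun δ hδ => ?_
    have := H (δ / Real.exp (L * t)) (by positivity)
    have e : δ / Real.exp (L * t) * Real.exp (L * t) = δ := by field_simp
    rw [e] at this
    linarith
  intro ε hε
  set D : Set (EuclideanSpace ℝ (Fin n) × EuclideanSpace ℝ (Fin n)) :=
    {p | ‖p.1‖ ≤ ‖p.2‖ ∧ ‖p.2‖ ≤ R} with hD
  have hDc : IsCompact D := by
    refine ((isCompact_closedBall (0 : EuclideanSpace ℝ (Fin n)) R).prod
      (isCompact_closedBall (0 : EuclideanSpace ℝ (Fin n)) R)).of_isClosed_subset ?_ ?_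
    · exact (isClosed_le continuous_fst.norm continuous_snd.norm).inter
        (isClosed_le continuous_snd.norm continuous_const)
    · rintro p ⟨h1, h2⟩
      exact ⟨by simpa using h1.trans h2, by simpa using h2⟩
  have hc1 : ∀ i, ContinuousOn
      (fun p : (EuclideanSpace ℝ (Fin n) × EuclideanSpace ℝ (Fin n)) × ℝ => w i p.1.1 p.2)
      (D ×ˢ Icc 0 t) := fun i =>
    (h.contOn i le_rfl ht.2).comp
      (f := fun p : (EuclideanSpace ℝ (Fin n) × EuclideanSpace ℝ (Fin n)) × ℝ => (p.1.1, p.2))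
      (by fun_prop) fun p hp => ⟨by simpa using hp.1.1.trans hp.1.2, hp.2⟩
  have hc2 : ∀ i, ContinuousOn
      (fun p : (EuclideanSpace ℝ (Fin n) × EuclideanSpace ℝ (Fin n)) × ℝ => w i p.1.2 p.2)
      (D ×ˢ Icc 0 t) := fun i =>
    (h.contOn i le_rfl ht.2).comp
      (f := fun p : (EuclideanSpace ℝ (Fin n) × EuclideanSpace ℝ (Fin n)) × ℝ => (p.1.2, p.2))
      (by fun_prop) fun p hp => ⟨by simpa using hp.1.2, hp.2⟩
  refine first_touch hDc (a := 0) (b := t)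
    (fun i p t => w i p.1 t - (w i p.2 t + ε * Real.exp (L * t)))
    (fun i => (hc1 i).sub ((hc2 i).add (by fun_prop))) ?_ ?_
    i (x, y) ⟨hxy, hy⟩ t ⟨ht.1, le_rfl⟩
  · rintro i ⟨x, y⟩ ⟨h1, h2⟩
    have := h0 i x y (h1.trans h2) h2 h1
    have : 0 < ε * Real.exp (L * 0) := by positivity
    linarith
  · rintro i ⟨x, y⟩ ⟨hxy, hyR⟩ s hs heq hle
    simp only at hxy hyR heq hle
    have hsT : s ∈ Ioo 0 T := ⟨hs.1, hs.2.trans_lt ht.2⟩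
    have hle' : ∀ j x y, ‖x‖ ≤ ‖y‖ → ‖y‖ ≤ R → ∀ r ∈ Icc 0 s,
        w j x r ≤ w j y r + ε * Real.exp (L * r) := fun j x y h1 h2 r hr => by
      linarith [hle j (x, y) ⟨h1, h2⟩ r hr]
    have hSpos : 0 < ε * Real.exp (L * s) := by positivity
    have hss : s ∈ Icc 0 s := ⟨hs.1.le, le_rfl⟩
    rcases hxy.lt_or_eq with hlt | hE
    · rcases hyR.lt_or_eq with hylt | hyR'
      · have hxR : ‖x‖ < R := hlt.trans hylt
        have d1 : HasDerivAt (fun r => ε * Real.exp (L * r)) (L * (ε * Real.exp (L * s))) s := by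
          refine ((((hasDerivAt_id' s).const_mul L).exp).const_mul ε).congr_deriv ?_
          ring
        have h1 := deriv_le_of_touch hs.1 (h.time i s hsT x hxR.le)
          ((h.time i s hsT y hyR).fun_add d1)
          (fun r hr => hle' i x y hxy hyR r hr) (by linarith)
        have h2 := lap_le_of_isLocalMax (h.reg i s hsT x hxR) (contDiffAt_const (c := (0 : ℝ))) (by
          filter_upwards [isOpen_ball.mem_nhds (show x ∈ ball 0 ‖y‖ by simpa using hlt)] with z hz
          have := hle' i z y (by simpa using (mem_ball.1 hz).le) hyR s hss
          linarith)
        have h3 := lap_le_of_isLocalMax (contDiffAt_const (c := (0 : ℝ))) (h.reg i s hsT y hylt) (by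
          have hopen : IsOpen {z : EuclideanSpace ℝ (Fin n) | ‖x‖ < ‖z‖ ∧ ‖z‖ < R} :=
            (isOpen_lt continuous_const continuous_norm).inter
              (isOpen_lt continuous_norm continuous_const)
          filter_upwards [hopen.mem_nhds ⟨hlt, hylt⟩] with z hz
          have := hle' i x z hz.1.le hz.2.le s hss
          linarith)
        rw [lap_const] at h2 h3
        rw [h.pde i s hsT x hxR, h.pde i s hsT y hylt] at h1
        have hE := exp_sub_exp_le (b := w (!i) y s) (hN (!i) x hxR.le s ⟨hs.1.le, hs.2⟩)
          (by linarith [hle' (!i) x y hxy hyR s hss]) hSpos.le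
        have h4 := mul_le_mul_of_nonneg_left hE hlam.le
        rw [hL] at h1
        nlinarith
      · have h1 := deriv_le_of_touch (t₀ := -(R - ‖x‖)) (by linarith)
          (hasDerivAt_const (0 : ℝ) (w i x s - ε * Real.exp (L * s))) (h.bc i s hsT y hyR')
          (fun r hr => by
            have h5 := norm_radial_move hR hyR' (s := r) (by linarith [hr.1, norm_nonneg x])
            have := hle' i x (y + r • (R⁻¹ • y)) (by linarith [hr.1]) (by linarith [hr.2]) s hss
            linarith) (by simp only [zero_smul, add_zero]; linarith)
        linarith [Real.exp_pos (w (!i) y s)]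
    · have := h.le_of_norm_eq hR hlam h0 i hE (hE.trans_le hyR) ⟨hs.1.le, hsT.2⟩
      linarith

/-! ### Supersolution with an exponential boundary layer -/

/-- The growth rate of the supersolution issued from the level `M`. -/
noncomputable def rate (n : ℕ) (R lam M : ℝ) : ℝ :=
  4 * Real.exp (M + 2) ^ 2 + 2 * (Real.exp (M + 2) / R) * n + lam * Real.exp (M + 2) + 1

/-- Starting below the level `M` at time `t₀`, the solution stays below `M + 2` during a time
`1 / rate`.  The supersolution is `M + G (t - t₀) + exp (k (‖x‖² - R²))` with `G` the rate and
`k = exp (M + 2) / R`, so that its flux on the sphere is `2 exp (M + 2)`. -/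
lemma lt_add_two (hR : 0 < R) (hlam : 0 < lam) (h : SymSol n R T lam w) {M t₀ : ℝ}
    (ht₀ : t₀ ∈ Ioo 0 T)
    (hM : ∀ i, ∀ x : EuclideanSpace ℝ (Fin n), ‖x‖ ≤ R → w i x t₀ ≤ M)
    (i : Bool) (x : EuclideanSpace ℝ (Fin n)) (hx : ‖x‖ ≤ R) {t : ℝ} (ht : t ∈ Ico t₀ T)
    (htG : rate n R lam M * (t - t₀) ≤ 1) : w i x t < M + 2 := by
  set E := Real.exp (M + 2) with hE
  have hEpos : 0 < E := Real.exp_pos _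
  set k := E / R with hk
  have hkpos : 0 < k := div_pos hEpos hR
  have hkR : k * R = E := by rw [hk]; field_simp
  set G := rate n R lam M with hG
  have hGe : G = 4 * k ^ 2 * R ^ 2 + 2 * k * n + lam * E + 1 := by
    rw [hG, rate, ← hE, ← hk, ← hkR]; ring
  have hGpos : 0 < G := by rw [hGe]; positivity
  have hψ1 : ∀ x : EuclideanSpace ℝ (Fin n), ‖x‖ ≤ R →
      Real.exp (-(k * R ^ 2)) * Real.exp (k * ‖x‖ ^ 2) ≤ 1 := by
    intro x hx
    rw [← Real.exp_add]
    apply Real.exp_le_one_iff.2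
    have : k * ‖x‖ ^ 2 ≤ k * R ^ 2 := by gcongr
    linarith
  have key := first_touch (isCompact_closedBall (0 : EuclideanSpace ℝ (Fin n)) R)
    (a := t₀) (b := t)
    (fun i x t => w i x t - (M + G * (t - t₀) + Real.exp (-(k * R ^ 2)) * Real.exp (k * ‖x‖ ^ 2)))
    (fun i => (h.contOn i ht₀.1.le ht.2).sub (by fun_prop)) ?_ ?_
    i x (by simpa using hx) t ⟨ht.1, le_rfl⟩
  · have := hψ1 x hx
    linarith
  · intro i x hx
    have := hM i x (by simpa using hx)
    have : 0 < Real.exp (-(k * R ^ 2)) * Real.exp (k * ‖x‖ ^ 2) := by positivity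
    simp only [sub_self, mul_zero, add_zero]; linarith
  · intro i x hx s hs heq hle
    have hx : ‖x‖ ≤ R := by simpa using hx
    have hsT : s ∈ Ioo 0 T := ⟨ht₀.1.trans hs.1, hs.2.trans_lt ht.2⟩
    have hψ := hψ1 x hx
    have hexp : Real.exp (w (!i) x s) ≤ E := by
      apply Real.exp_le_exp.2
      have h1 := hle (!i) x (by simpa using hx) s ⟨hs.1.le, le_rfl⟩
      have h2 : G * (s - t₀) ≤ G * (t - t₀) := by gcongr; exact hs.2
      linarith
    rcases hx.lt_or_eq with hlt | hxR
    · have d1 : HasDerivAt (fun r => M + G * (r - t₀)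
          + Real.exp (-(k * R ^ 2)) * Real.exp (k * ‖x‖ ^ 2)) G s := by
        simpa using ((((hasDerivAt_id' s).sub_const t₀).const_mul G).const_add M).add_const
          (Real.exp (-(k * R ^ 2)) * Real.exp (k * ‖x‖ ^ 2))
      have h1 := deriv_le_of_touch hs.1 (h.time i s hsT x hx) d1
        (fun r hr => by linarith [hle i x (by simpa using hx) r hr]) (by linarith)
      have c2 : ContDiffAt ℝ 2 (fun y : EuclideanSpace ℝ (Fin n) =>
          Real.exp (-(k * R ^ 2)) * Real.exp (k * ‖y‖ ^ 2)) x :=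
        contDiffAt_const.mul (contDiff_expWeight k).contDiffAt
      have h2 := lap_le_of_isLocalMax (h.reg i s hsT x hlt)
        ((contDiffAt_const (c := M + G * (s - t₀))).add c2) (by
        filter_upwards [isOpen_ball.mem_nhds (show x ∈ ball 0 R by simpa using hlt)] with y hy
        have := hle i y (ball_subset_closedBall hy) s ⟨hs.1.le, le_rfl⟩
        linarith)
      rw [lap_add contDiffAt_const c2, lap_const, lap_const_mul, lap_expWeight] at h2
      rw [h.pde i s hsT x hlt] at h1
      have h3 : Real.exp (-(k * R ^ 2)) * ((4 * k ^ 2 * ‖x‖ ^ 2 + 2 * k * n)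
          * Real.exp (k * ‖x‖ ^ 2)) ≤ 4 * k ^ 2 * R ^ 2 + 2 * k * n := by
        calc _ = (4 * k ^ 2 * ‖x‖ ^ 2 + 2 * k * n)
              * (Real.exp (-(k * R ^ 2)) * Real.exp (k * ‖x‖ ^ 2)) := by ring
          _ ≤ (4 * k ^ 2 * R ^ 2 + 2 * k * n) * 1 := by gcongr
          _ = _ := mul_one _
      have h4 := mul_le_mul_of_nonneg_left hexp hlam.le
      rw [hGe] at h1
      linarith
    · have d1 := ((hasDerivAt_expWeight_normal hR k hxR).const_mul
        (Real.exp (-(k * R ^ 2)))).const_add (M + G * (s - t₀))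
      have h1 := deriv_le_of_touch (t₀ := -R) (by linarith) (h.bc i s hsT x hxR) d1
        (fun r hr => by
          have := norm_radial_move hR hxR hr.1
          have := hle i (x + r • (R⁻¹ • x)) (by
            simp only [mem_closedBall, dist_zero_right]; linarith [hr.2]) s ⟨hs.1.le, le_rfl⟩
          linarith) (by simp only [zero_smul, add_zero]; linarith)
      have h3 : Real.exp (-(k * R ^ 2)) * (2 * k * R * Real.exp (k * R ^ 2)) = 2 * E := by
        rw [← hkR, Real.exp_neg]; field_simp
      rw [h3] at h1
      linarith

lemma rate_le (hR : 0 < R) (hlam : 0 < lam) {M : ℝ} (hM : 0 ≤ M) :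
    rate n R lam M ≤ (4 * Real.exp 2 ^ 2 + 2 * (Real.exp 2 / R) * n + lam * Real.exp 2 + 1)
      * Real.exp (2 * M) := by
  have h1 : 1 ≤ Real.exp M := Real.one_le_exp hM
  have h2 : Real.exp (2 * M) = Real.exp M ^ 2 := by rw [← Real.exp_nat_mul]; norm_num
  have h3 : Real.exp M ≤ Real.exp M ^ 2 := by nlinarith
  have h4 : 1 ≤ Real.exp M ^ 2 := h1.trans h3
  have h5 : 0 ≤ 2 * (Real.exp 2 / R) * n := by positivity
  have h6 : 0 ≤ lam * Real.exp 2 := by positivity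
  rw [rate, h2, Real.exp_add]
  have h7 := mul_le_mul_of_nonneg_left h3 h5
  have h8 := mul_le_mul_of_nonneg_left h3 h6
  have h9 : 2 * (Real.exp M * Real.exp 2 / R) * n = 2 * (Real.exp 2 / R) * n * Real.exp M := by
    ring
  rw [h9]
  nlinarith

end SymSol

/-- Theorem 3.1 (lower blow-up rate): let `λ₁ = λ₂ = λ > 0` and let `(u,v)` be a classical
solution of problem (1.1) blowing up at time `T < ∞`.  If the initial data satisfy
`u₀'(r) − (r/R) e^{v₀(r)} ≥ 0` and `v₀'(r) − (r/R) e^{u₀(r)} ≥ 0` on `[0,R]` (expressed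
along each unit direction `e`), then there is `c > 0` with
`u(R,t) ≥ log c − (1/2) log(T−t)` and `v(R,t) ≥ log c − (1/2) log(T−t)` for `t ∈ (0,T)`. -/
theorem lower_blowup_rate {n : ℕ} (hn : 1 ≤ n) {R T lam : ℝ}
    (hR : 0 < R) (hT : 0 < T) (hlam : 0 < lam)
    {u v : EuclideanSpace ℝ (Fin n) → ℝ → ℝ} {u₀ v₀ : EuclideanSpace ℝ (Fin n) → ℝ}
    (hdata : AdmissibleData n R u₀ v₀)
    (hsol : IsClassicalSolution n R T lam lam u v u₀ v₀)
    (hblow : BlowsUpAt n R T u v)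
    (hinit_u : ∀ e : EuclideanSpace ℝ (Fin n), ‖e‖ = 1 → ∀ r ∈ Icc (0 : ℝ) R,
      0 ≤ derivWithin (fun ρ : ℝ => u₀ (ρ • e)) (Icc 0 R) r - (r / R) * Real.exp (v₀ (r • e)))
    (hinit_v : ∀ e : EuclideanSpace ℝ (Fin n), ‖e‖ = 1 → ∀ r ∈ Icc (0 : ℝ) R,
      0 ≤ derivWithin (fun ρ : ℝ => v₀ (ρ • e)) (Icc 0 R) r - (r / R) * Real.exp (u₀ (r • e))) :
    ∃ c : ℝ, 0 < c ∧ ∀ t ∈ Ioo (0 : ℝ) T, ∀ x : EuclideanSpace ℝ (Fin n), ‖x‖ = R →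
      Real.log c - (1 / 2) * Real.log (T - t) ≤ u x t ∧
      Real.log c - (1 / 2) * Real.log (T - t) ≤ v x t := by
  set w : Bool → EuclideanSpace ℝ (Fin n) → ℝ → ℝ := fun b => bif b then u else v with hw
  have h : SymSol n R T lam w := hsol.symSol
  have mem : ∀ {x : EuclideanSpace ℝ (Fin n)}, ‖x‖ ≤ R → x ∈ closedBall 0 R := fun hx => by
    simpa using hx
  have h0 : ∀ i, ∀ x : EuclideanSpace ℝ (Fin n), ‖x‖ ≤ R → 0 ≤ w i x 0 := by
    intro i x hx
    cases i
    · simpa [hw, hsol.init_v x (mem hx)] using hdata.v0_nonneg x (mem hx)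
    · simpa [hw, hsol.init_u x (mem hx)] using hdata.u0_nonneg x (mem hx)
  have hmono : ∀ i, ∀ x y : EuclideanSpace ℝ (Fin n), ‖x‖ ≤ R → ‖y‖ ≤ R → ‖x‖ ≤ ‖y‖ →
      w i x 0 ≤ w i y 0 := by
    intro i x y hx hy hxy
    cases i
    · simpa [hw, hsol.init_v x (mem hx), hsol.init_v y (mem hy)]
        using hdata.v0_radial_mono x (mem hx) y (mem hy) hxy
    · simpa [hw, hsol.init_u x (mem hx), hsol.init_u y (mem hy)]
        using hdata.u0_radial_mono x (mem hx) y (mem hy) hxy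
  obtain ⟨N, hN⟩ := h.exists_bound (b := 0) hT
  set K := max N 0 + 1 with hKdef
  have hK1 : 1 ≤ K := by linarith [le_max_right N 0]
  have hdiff0 : ∀ i, ∀ x : EuclideanSpace ℝ (Fin n), ‖x‖ ≤ R → w i x 0 - w (!i) x 0 < K := by
    intro i x hx
    linarith [hN i x hx 0 ⟨le_rfl, le_rfl⟩, h0 (!i) x hx, le_max_left N 0]
  set C := 4 * Real.exp 2 ^ 2 + 2 * (Real.exp 2 / R) * n + lam * Real.exp 2 + 1 with hC
  have hCpos : 0 < C := by positivity
  have main : ∀ i, ∀ t ∈ Ioo (0 : ℝ) T, ∀ y : EuclideanSpace ℝ (Fin n), ‖y‖ = R →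
      -K - (1 / 2) * Real.log C - (1 / 2) * Real.log (T - t) ≤ w i y t := by
    intro i t ht y hy
    have ht' : t ∈ Ico 0 T := ⟨ht.1.le, ht.2⟩
    set M := w i y t + K with hM
    have hMpos : 0 ≤ M := by
      have := h.gt_neg_one hR hlam h0 i y hy.le ht'
      linarith
    have hMb : ∀ j, ∀ x : EuclideanSpace ℝ (Fin n), ‖x‖ ≤ R → w j x t ≤ M := by
      intro j x hx
      have h1 := h.le_of_norm_le hR hlam hmono j (hx.trans hy.ge) hy.le ht'
      have h2 : w j y t ≤ w i y t + K := by
        by_cases hij : j = i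
        · subst hij; linarith
        · have hji : (!j) = i := by cases i <;> cases j <;> simp_all
          have := h.sub_lt hR hlam (by linarith) hdiff0 j y hy.le ht'
          rw [hji] at this
          exact this.le
      linarith
    -- otherwise the solution stays bounded up to the blow-up time
    have hG : 1 ≤ SymSol.rate n R lam M * (T - t) := by
      by_contra! hcon
      have hGpos : 0 < SymSol.rate n R lam M := by unfold SymSol.rate; positivity
      have hfreq := (hblow (2 * (M + 2))).and_eventually (Ioo_mem_nhdsLT ht.2)
      obtain ⟨s, ⟨x, hx, hlt⟩, hs⟩ := hfreq.exists
      have hb : ∀ j, w j x s < M + 2 := fun j =>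
        h.lt_add_two hR hlam ht hMb j x (by simpa using hx) ⟨hs.1.le, hs.2⟩ (by
          have : SymSol.rate n R lam M * (s - t) ≤ SymSol.rate n R lam M * (T - t) := by
            gcongr; exact hs.2.le
          linarith)
      have h1 := hb true
      have h2 := hb false
      simp only [hw, cond_true, cond_false] at h1 h2
      linarith
    have hTt : 0 < T - t := sub_pos.2 ht.2
    have h1 : 1 ≤ C * Real.exp (2 * M) * (T - t) :=
      hG.trans (mul_le_mul_of_nonneg_right (SymSol.rate_le hR hlam hMpos) hTt.le)
    have h2 := Real.log_nonneg h1
    rw [Real.log_mul (by positivity) hTt.ne', Real.log_mul hCpos.ne' (Real.exp_pos _).ne',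
      Real.log_exp] at h2
    linarith
  refine ⟨Real.exp (-K - (1 / 2) * Real.log C), Real.exp_pos _, fun t ht x hx => ?_⟩
  rw [Real.log_exp]
  exact ⟨main true t ht x hx, main false t ht x hx⟩
end

section
/- Remark 4.2 (boundary blow-up set): Let (u,v) be a classical solution of problem (1.1) that blows up at time T < ∞. There exists λ₀ > 0, depending only on n, R, T, ‖u₀‖_∞, ‖v₀‖_∞ and the constant C from the upper blow-up rate estimate e^{u(R,t)}, e^{v(R,t)} ≤ C/(T−t), such that if max{λ₁, λ₂} ≤ λ₀, then no interior point is a blow-up point: for every compact set K ⊂ B_R, u and v are bounded on K × (0,T). Consequently the blow-up set is contained in ∂B_R. -/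
/-!
Two maximum-principle arguments give `0 ≤ u, v ≤ w` on `cl(B_R) × [0,T)` for one explicit barrier

  `w(x,t) = log A - log ((R² - |x|²)² + B (T - t))`,

which stays finite up to time `T` at every interior point; local boundedness follows.

Write `z = (R² - |x|²)² + B (T - t)`. Then `w_t = B / z`, while
`Δw = (4 n (R² - |x|²) - 8 |x|²) / z + 16 (R² - |x|²)² |x|² / z² ≤ (4 n R² + 16 R²) / z`, because
`(R² - |x|²)² ≤ z`. Since `e^w = A / z`, the choice `B = 4 n R² + 16 R² + 2` makes `w` a strict
supersolution of `w_t = Δw + λ e^w` whenever `λ A ≤ 1`. Taking `A > B C` puts `e^w = A / (B (T - t))`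
strictly above the rate bound `C / (T - t)` on the sphere, and taking `A` large compared with
`e^{max Ku Kv}` puts `w` strictly above the initial data. So `λ₀ = 1 / A` works: at a first contact of
`max u v` with `w` (`lt_barrier`), the contact point is interior, and comparing the time derivative
with the second derivatives along the axes contradicts strictness (`no_contact`).

For the lower bound (`nonneg_of_supersolution`), a negative minimum of `u` can neither be interior,
since `u_t - Δu = λ₁ e^v > 0`, nor lie on the sphere, where the outward normal derivative `e^v` is
positive.
-/

open Set Real Metric MeasureTheory Filter Topology

/-- `x` is a blow-up point of `(u,v)` at time `T`: there exist sequences `x_k → x` in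
`cl(B_R)` and `t_k → T⁻` with `u(x_k,t_k) → ∞` or `v(x_k,t_k) → ∞`. -/
def IsBlowUpPoint (n : ℕ) (R T : ℝ) (u v : EuclideanSpace ℝ (Fin n) → ℝ → ℝ)
    (x : EuclideanSpace ℝ (Fin n)) : Prop :=
  ∃ (xs : ℕ → EuclideanSpace ℝ (Fin n)) (ts : ℕ → ℝ),
    (∀ k, xs k ∈ closedBall (0 : EuclideanSpace ℝ (Fin n)) R) ∧
    (∀ k, ts k ∈ Ioo (0 : ℝ) T) ∧
    Tendsto xs atTop (𝓝 x) ∧ Tendsto ts atTop (𝓝 T) ∧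
    (Tendsto (fun k => u (xs k) (ts k)) atTop atTop ∨
     Tendsto (fun k => v (xs k) (ts k)) atTop atTop)

/-! ### One-variable calculus -/

/-- Only values to the left of `a` are compared, so the lemma also serves at the endpoint of an
interval. -/
lemma deriv_nonneg_of_left {g : ℝ → ℝ} {g' a c : ℝ} (hca : c < a) (hg : HasDerivAt g g' a)
    (h : ∀ t ∈ Ioo c a, g t ≤ g a) : 0 ≤ g' := by
  have h1 : Tendsto (slope g a) (𝓝[<] a) (𝓝 g') :=
    (hasDerivAt_iff_tendsto_slope.1 hg).mono_left
      (nhdsWithin_mono a (fun y (hy : y < a) => ne_of_lt hy))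
  refine ge_of_tendsto h1 ?_
  filter_upwards [Ioo_mem_nhdsLT hca] with t ht
  rw [slope_def_field]
  exact div_nonneg_of_nonpos (by linarith [h t ht]) (by linarith [ht.2])

lemma second_deriv_nonpos_of_isLocalMax {g : ℝ → ℝ} {a : ℝ} (hg : ContDiffAt ℝ 2 g a)
    (h : IsLocalMax g a) : iteratedDeriv 2 g a ≤ 0 := by
  rw [iteratedDeriv_succ, iteratedDeriv_one]
  by_contra! hpos
  -- The second derivative test makes `a` a local minimum too, so `g` is locally constant.
  have hmin : IsLocalMin g a :=
    isLocalMin_of_deriv_deriv_pos hpos h.deriv_eq_zero hg.continuousAt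
  have hc : g =ᶠ[𝓝 a] fun _ => g a := by
    filter_upwards [h, hmin] with y hy1 hy2 using le_antisymm hy1 hy2
  have h2 : deriv (deriv g) a = deriv (deriv fun _ => g a) a := hc.deriv.deriv_eq
  simp at h2
  linarith

lemma iteratedDeriv_two_le_of_isLocalMax_sub {f g : ℝ → ℝ} {a : ℝ} (hf : ContDiffAt ℝ 2 f a)
    (hg : ContDiffAt ℝ 2 g a) (h : IsLocalMax (fun s => f s - g s) a) :
    iteratedDeriv 2 f a ≤ iteratedDeriv 2 g a := by
  have h1 := second_deriv_nonpos_of_isLocalMax (hf.sub hg) h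
  have h2 : iteratedDeriv 2 (f - g) a = iteratedDeriv 2 f a - iteratedDeriv 2 g a :=
    iteratedDeriv_sub hf hg
  have h3 : iteratedDeriv 2 (f - g) a ≤ 0 := h1
  linarith

/-! ### Coordinate slices and the Laplacian -/

section Slices

variable {n : ℕ}

lemma slice_contDiffAt {R : ℝ} {f : EuclideanSpace ℝ (Fin n) → ℝ} {x : EuclideanSpace ℝ (Fin n)}
    (hx : x ∈ ball (0 : EuclideanSpace ℝ (Fin n)) R)
    (hf : ContDiffOn ℝ 2 f (closedBall (0 : EuclideanSpace ℝ (Fin n)) R))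
    (e : EuclideanSpace ℝ (Fin n)) : ContDiffAt ℝ 2 (fun s : ℝ => f (x + s • e)) 0 := by
  have h1 : ContDiffAt ℝ 2 f (x + (0 : ℝ) • e) := by
    rw [zero_smul, add_zero]
    exact hf.contDiffAt (mem_of_superset (isOpen_ball.mem_nhds hx) ball_subset_closedBall)
  have h2 : ContDiffAt ℝ 2 (fun s : ℝ => x + s • e) 0 := by fun_prop
  exact ContDiffAt.comp (0 : ℝ) h1 h2

lemma eventually_slice_mem {R : ℝ} {x : EuclideanSpace ℝ (Fin n)}
    (hx : x ∈ ball (0 : EuclideanSpace ℝ (Fin n)) R) (e : EuclideanSpace ℝ (Fin n)) :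
    ∀ᶠ s : ℝ in 𝓝 0, x + s • e ∈ closedBall (0 : EuclideanSpace ℝ (Fin n)) R := by
  have h2 : ContinuousAt (fun s : ℝ => x + s • e) 0 := by fun_prop
  apply h2
  simp only [zero_smul, add_zero]
  exact mem_of_superset (isOpen_ball.mem_nhds hx) ball_subset_closedBall

lemma lap_nonneg_of_min {R : ℝ} {f : EuclideanSpace ℝ (Fin n) → ℝ} {x : EuclideanSpace ℝ (Fin n)}
    (hx : x ∈ ball (0 : EuclideanSpace ℝ (Fin n)) R)
    (hf : ContDiffOn ℝ 2 f (closedBall (0 : EuclideanSpace ℝ (Fin n)) R))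
    (hmin : ∀ y ∈ closedBall (0 : EuclideanSpace ℝ (Fin n)) R, f x ≤ f y) : 0 ≤ lap f x := by
  refine Finset.sum_nonneg fun i _ => ?_
  have h := iteratedDeriv_two_le_of_isLocalMax_sub (a := (0 : ℝ)) (f := fun _ : ℝ => (0 : ℝ))
    contDiffAt_const (slice_contDiffAt hx hf (EuclideanSpace.single i 1)) (by
      filter_upwards [eventually_slice_mem hx (EuclideanSpace.single i 1)] with s hs
      simpa using hmin _ hs)
  simpa [iteratedDeriv_const] using h

lemma norm_sq_slice (x : EuclideanSpace ℝ (Fin n)) (i : Fin n) (s : ℝ) :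
    ‖x + s • EuclideanSpace.single i (1 : ℝ)‖ ^ 2 = ‖x‖ ^ 2 + 2 * x i * s + s ^ 2 := by
  rw [norm_add_sq_real, inner_smul_right, EuclideanSpace.inner_single_right, norm_smul]
  simp
  ring

/-! ### The barrier -/

/-- The barrier `w(x,t) = log A - log ((R² - |x|²)² + B (T - t))`. -/
noncomputable def barrier (R T A B : ℝ) (x : EuclideanSpace ℝ (Fin n)) (t : ℝ) : ℝ :=
  Real.log A - Real.log ((R ^ 2 - ‖x‖ ^ 2) ^ 2 + B * (T - t))

lemma barrier_arg_pos {R T B t : ℝ} (hB : 0 < B) (ht : t < T) (x : EuclideanSpace ℝ (Fin n)) :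
    0 < (R ^ 2 - ‖x‖ ^ 2) ^ 2 + B * (T - t) := by
  have := mul_pos hB (sub_pos.2 ht)
  positivity

lemma exp_barrier {R T A B t : ℝ} (hA : 0 < A) (hB : 0 < B) (ht : t < T)
    (x : EuclideanSpace ℝ (Fin n)) :
    Real.exp (barrier R T A B x t) = A / ((R ^ 2 - ‖x‖ ^ 2) ^ 2 + B * (T - t)) := by
  rw [barrier, Real.exp_sub, Real.exp_log hA, Real.exp_log (barrier_arg_pos hB ht x)]

lemma barrier_hasDerivAt {R T A B t : ℝ} (hB : 0 < B) (ht : t < T)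
    (x : EuclideanSpace ℝ (Fin n)) :
    HasDerivAt (fun τ => barrier R T A B x τ) (B / ((R ^ 2 - ‖x‖ ^ 2) ^ 2 + B * (T - t))) t := by
  have hz := barrier_arg_pos (R := R) hB ht x
  have h1 : HasDerivAt (fun τ => (R ^ 2 - ‖x‖ ^ 2) ^ 2 + B * (T - τ)) (-B) t := by
    have := (((hasDerivAt_id t).const_sub T).const_mul B).const_add ((R ^ 2 - ‖x‖ ^ 2) ^ 2)
    simpa using this
  have h2 := (h1.log hz.ne').const_sub (Real.log A)
  unfold barrier
  exact h2.congr_deriv (by ring)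

lemma barrier_continuousOn {R T A B : ℝ} (hB : 0 < B) :
    ContinuousOn (fun p : EuclideanSpace ℝ (Fin n) × ℝ => barrier R T A B p.1 p.2)
      ((closedBall (0 : EuclideanSpace ℝ (Fin n)) R) ×ˢ Ico (0 : ℝ) T) := by
  unfold barrier
  refine continuousOn_const.sub (ContinuousOn.log (by fun_prop) ?_)
  intro p hp
  exact (barrier_arg_pos hB hp.2.2 p.1).ne'

/-- The profile of a coordinate slice of the barrier; here `a = R² - |x|²`, `c = xᵢ`,
`b = B (T - t)` and `L = log A`. -/
lemma slice_barrier_second_deriv (L a b c : ℝ) (hb : 0 < b) :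
    ContDiffAt ℝ 2 (fun s : ℝ => L - Real.log ((a - 2 * c * s - s ^ 2) ^ 2 + b)) 0 ∧
    iteratedDeriv 2 (fun s : ℝ => L - Real.log ((a - 2 * c * s - s ^ 2) ^ 2 + b)) 0 =
      (4 * a - 8 * c ^ 2) / (a ^ 2 + b) + 16 * a ^ 2 * c ^ 2 / (a ^ 2 + b) ^ 2 := by
  have hz : ∀ s : ℝ, (a - 2 * c * s - s ^ 2) ^ 2 + b ≠ 0 := fun s => by positivity
  constructor
  · exact contDiffAt_const.sub (ContDiffAt.log (by fun_prop) (hz 0))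
  have hq : ∀ s : ℝ, HasDerivAt (fun s : ℝ => a - 2 * c * s - s ^ 2) (-2 * c - 2 * s) s := by
    intro s
    have := (((hasDerivAt_id s).const_mul (2 * c)).const_sub a).sub (hasDerivAt_pow 2 s)
    exact this.congr_deriv (by simp)
  have hz' : ∀ s : ℝ, HasDerivAt (fun s : ℝ => (a - 2 * c * s - s ^ 2) ^ 2 + b)
      (2 * (a - 2 * c * s - s ^ 2) * (-2 * c - 2 * s)) s := by
    intro s
    have := ((hq s).pow 2).add_const b
    exact this.congr_deriv (by simp)
  have h1 : deriv (fun s : ℝ => L - Real.log ((a - 2 * c * s - s ^ 2) ^ 2 + b)) =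
      fun s => -(2 * (a - 2 * c * s - s ^ 2) * (-2 * c - 2 * s) /
        ((a - 2 * c * s - s ^ 2) ^ 2 + b)) := by
    funext s
    exact (((hz' s).log (hz s)).const_sub L).deriv
  have hl : HasDerivAt (fun s : ℝ => -2 * c - 2 * s) (-2) 0 := by
    have := ((hasDerivAt_id (0 : ℝ)).const_mul 2).const_sub (-2 * c)
    simpa using this
  rw [iteratedDeriv_succ, iteratedDeriv_one, h1]
  have h2 := (((((hq 0).const_mul 2).mul hl).div (hz' 0) (hz 0)).neg).deriv
  have hab : a ^ 2 + b ≠ 0 := by positivity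
  refine Eq.trans h2 ?_
  simp
  field_simp
  ring

/-- If the barrier touches `f` from above at an interior point, then `Δf` there is at most the
Laplacian of the barrier, which is bounded by `(4 n R² + 16 R²) / z`. -/
lemma lap_le_of_touch {R T A B t : ℝ} (hB : 0 < B) (ht : t < T)
    {f : EuclideanSpace ℝ (Fin n) → ℝ} {x : EuclideanSpace ℝ (Fin n)}
    (hx : x ∈ ball (0 : EuclideanSpace ℝ (Fin n)) R)
    (hf : ContDiffOn ℝ 2 f (closedBall (0 : EuclideanSpace ℝ (Fin n)) R))
    (hle : ∀ y ∈ closedBall (0 : EuclideanSpace ℝ (Fin n)) R, f y ≤ barrier R T A B y t)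
    (heq : f x = barrier R T A B x t) :
    lap f x ≤ (4 * n * R ^ 2 + 16 * R ^ 2) / ((R ^ 2 - ‖x‖ ^ 2) ^ 2 + B * (T - t)) := by
  set a := R ^ 2 - ‖x‖ ^ 2 with ha
  set b := B * (T - t) with hb
  have hb0 : 0 < b := mul_pos hB (sub_pos.2 ht)
  have hslice : ∀ i : Fin n, ∀ s : ℝ, barrier R T A B (x + s • EuclideanSpace.single i (1 : ℝ)) t
      = Real.log A - Real.log ((a - 2 * x i * s - s ^ 2) ^ 2 + b) := by
    intro i s
    rw [barrier, norm_sq_slice, ha, hb]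
    ring_nf
  have h1 : lap f x ≤ ∑ i : Fin n, ((4 * a - 8 * x i ^ 2) / (a ^ 2 + b)
      + 16 * a ^ 2 * x i ^ 2 / (a ^ 2 + b) ^ 2) := by
    refine Finset.sum_le_sum fun i _ => ?_
    obtain ⟨hc, hd⟩ := slice_barrier_second_deriv (Real.log A) a b (x i) hb0
    rw [← hd]
    refine iteratedDeriv_two_le_of_isLocalMax_sub
      (slice_contDiffAt hx hf (EuclideanSpace.single i 1)) hc ?_
    filter_upwards [eventually_slice_mem hx (EuclideanSpace.single i 1)] with s hs
    rw [← hslice i s, ← hslice i 0]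
    have := hle _ hs
    simp only [zero_smul, add_zero]
    linarith
  have hsum : ∑ i : Fin n, x i ^ 2 = ‖x‖ ^ 2 := by
    rw [EuclideanSpace.norm_sq_eq]
    simp
  have h2 : ∑ i : Fin n, ((4 * a - 8 * x i ^ 2) / (a ^ 2 + b)
      + 16 * a ^ 2 * x i ^ 2 / (a ^ 2 + b) ^ 2) =
      (4 * n * a - 8 * ‖x‖ ^ 2) / (a ^ 2 + b) + 16 * a ^ 2 * ‖x‖ ^ 2 / (a ^ 2 + b) ^ 2 := by
    rw [Finset.sum_add_distrib, ← Finset.sum_div, ← Finset.sum_div, Finset.sum_sub_distrib,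
      ← Finset.mul_sum _ _ (8 : ℝ), ← Finset.mul_sum _ _ (16 * a ^ 2), hsum]
    simp
    ring
  have hz : 0 < a ^ 2 + b := by positivity
  have hxR : ‖x‖ ^ 2 ≤ R ^ 2 := by
    have : ‖x‖ < R := by simpa using hx
    gcongr
  have h3 : 16 * a ^ 2 * ‖x‖ ^ 2 / (a ^ 2 + b) ^ 2 ≤ 16 * R ^ 2 / (a ^ 2 + b) := by
    rw [div_le_div_iff₀ (by positivity) hz]
    have : a ^ 2 * ‖x‖ ^ 2 ≤ (a ^ 2 + b) * R ^ 2 := by gcongr; linarith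
    nlinarith
  have h4 : (4 * n * a - 8 * ‖x‖ ^ 2) / (a ^ 2 + b) ≤ 4 * n * R ^ 2 / (a ^ 2 + b) := by
    gcongr
    have hx2 : 0 ≤ ‖x‖ ^ 2 := by positivity
    have : 4 * (n : ℝ) * a ≤ 4 * n * R ^ 2 := by gcongr; linarith
    linarith
  rw [add_div]
  linarith

/-- The barrier is a strict supersolution, so a solution `f` of `f_t = Δf + lam e^g`, with both
`f` and `g` below the barrier up to time `t`, cannot touch it at an interior point. -/
lemma no_contact {R T A B lam t : ℝ} (hR : 0 < R) (hA : 0 < A)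
    (hB : B = 4 * n * R ^ 2 + 16 * R ^ 2 + 2) (hlam : 0 < lam) (hlamA : lam * A ≤ 1)
    (ht : t ∈ Ioo (0 : ℝ) T) {f g : EuclideanSpace ℝ (Fin n) → ℝ → ℝ}
    {x : EuclideanSpace ℝ (Fin n)}
    (hx : x ∈ ball (0 : EuclideanSpace ℝ (Fin n)) R)
    (hf : ContDiffOn ℝ 2 (fun y => f y t) (closedBall (0 : EuclideanSpace ℝ (Fin n)) R))
    (hft : DifferentiableAt ℝ (f x) t)
    (hpde : deriv (f x) t = lap (fun y => f y t) x + lam * Real.exp (g x t))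
    (hle : ∀ y ∈ closedBall (0 : EuclideanSpace ℝ (Fin n)) R, f y t ≤ barrier R T A B y t)
    (hgle : g x t ≤ barrier R T A B x t)
    (hpast : ∀ τ ∈ Ioo (0 : ℝ) t, f x τ ≤ barrier R T A B x τ) :
    f x t ≠ barrier R T A B x t := by
  intro heq
  have hB0 : 0 < B := by rw [hB]; positivity
  have h1 := lap_le_of_touch hB0 ht.2 hx hf hle heq
  have hz := barrier_arg_pos (R := R) hB0 ht.2 x
  have h2 := deriv_nonneg_of_left ht.1 (hft.hasDerivAt.sub (barrier_hasDerivAt (A := A) (R := R)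
    hB0 ht.2 x)) (by
      intro τ hτ
      have := hpast τ hτ
      simp only [Pi.sub_apply]
      linarith)
  have h3 : lam * Real.exp (g x t) ≤ 1 / ((R ^ 2 - ‖x‖ ^ 2) ^ 2 + B * (T - t)) := by
    calc lam * Real.exp (g x t) ≤ lam * Real.exp (barrier R T A B x t) := by gcongr
      _ = lam * A / ((R ^ 2 - ‖x‖ ^ 2) ^ 2 + B * (T - t)) := by
        rw [exp_barrier hA hB0 ht.2]; ring
      _ ≤ _ := by gcongr
  have h4 : (4 * n * R ^ 2 + 16 * R ^ 2) / ((R ^ 2 - ‖x‖ ^ 2) ^ 2 + B * (T - t))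
      + 1 / ((R ^ 2 - ‖x‖ ^ 2) ^ 2 + B * (T - t)) < B / ((R ^ 2 - ‖x‖ ^ 2) ^ 2 + B * (T - t)) := by
    rw [← add_div]
    gcongr
    linarith
  linarith

/-! ### The two comparison arguments -/

/-- Comparison with the barrier: a solution strictly below it on the sphere (`hbd`) and at time `0`
(`hinit0`) stays strictly below it, because there is no first contact. -/
lemma lt_barrier {R T A B lam1 lam2 : ℝ} (hR : 0 < R) (hA : 0 < A)
    (hB : B = 4 * n * R ^ 2 + 16 * R ^ 2 + 2) (hlam1 : 0 < lam1) (hlam2 : 0 < lam2)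
    (hlamA1 : lam1 * A ≤ 1) (hlamA2 : lam2 * A ≤ 1)
    {u v : EuclideanSpace ℝ (Fin n) → ℝ → ℝ} {u₀ v₀ : EuclideanSpace ℝ (Fin n) → ℝ}
    (hs : IsClassicalSolution n R T lam1 lam2 u v u₀ v₀)
    (hbd : ∀ t ∈ Ioo (0 : ℝ) T, ∀ x : EuclideanSpace ℝ (Fin n), ‖x‖ = R →
      u x t < barrier R T A B x t ∧ v x t < barrier R T A B x t)
    (hinit0 : ∀ x ∈ closedBall (0 : EuclideanSpace ℝ (Fin n)) R,
      u x 0 < barrier R T A B x 0 ∧ v x 0 < barrier R T A B x 0) :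
    ∀ x ∈ closedBall (0 : EuclideanSpace ℝ (Fin n)) R, ∀ t ∈ Ico (0 : ℝ) T,
      u x t < barrier R T A B x t ∧ v x t < barrier R T A B x t := by
  have hB0 : 0 < B := by rw [hB]; positivity
  set F : EuclideanSpace ℝ (Fin n) × ℝ → ℝ := fun p =>
    max (u p.1 p.2 - barrier R T A B p.1 p.2) (v p.1 p.2 - barrier R T A B p.1 p.2) with hF
  have hFc : ContinuousOn F ((closedBall (0 : EuclideanSpace ℝ (Fin n)) R) ×ˢ Ico (0 : ℝ) T) :=
    (hs.cont_u.sub (barrier_continuousOn hB0)).sup (hs.cont_v.sub (barrier_continuousOn hB0))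
  have hFlt : ∀ x t, F (x, t) < 0 ↔ u x t < barrier R T A B x t ∧ v x t < barrier R T A B x t := by
    intro x t
    simp [hF]
  have hFle : ∀ x t, F (x, t) ≤ 0 ↔ u x t ≤ barrier R T A B x t ∧ v x t ≤ barrier R T A B x t := by
    intro x t
    simp [hF]
  intro x₁ hx₁ t₁ ht₁
  rw [← hFlt]
  by_contra! hcon
  -- The contact set up to time `t₁` is compact, so it has a point with the smallest time.
  set Q := (closedBall (0 : EuclideanSpace ℝ (Fin n)) R) ×ˢ Icc (0 : ℝ) t₁ with hQ
  have hQsub : Q ⊆ (closedBall (0 : EuclideanSpace ℝ (Fin n)) R) ×ˢ Ico (0 : ℝ) T :=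
    prod_mono_right (fun t ht => ⟨ht.1, lt_of_le_of_lt ht.2 ht₁.2⟩)
  have hQc : IsCompact Q := (isCompact_closedBall _ _).prod isCompact_Icc
  have hSc : IsCompact (Q ∩ F ⁻¹' Ici 0) :=
    hQc.of_isClosed_subset ((hFc.mono hQsub).preimage_isClosed_of_isClosed hQc.isClosed isClosed_Ici)
      inter_subset_left
  obtain ⟨⟨x, t⟩, hxt, hmin⟩ := hSc.exists_isMinOn
    ⟨(x₁, t₁), ⟨hx₁, ht₁.1, le_rfl⟩, hcon⟩ continuous_snd.continuousOn
  have hxB : x ∈ closedBall (0 : EuclideanSpace ℝ (Fin n)) R := hxt.1.1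
  have ht0 : 0 ≤ t := hxt.1.2.1
  have htt₁ : t ≤ t₁ := hxt.1.2.2
  have hF0 : 0 ≤ F (x, t) := hxt.2
  have htT : t < T := lt_of_le_of_lt htt₁ ht₁.2
  have hpos : 0 < t := by
    rcases ht0.eq_or_lt with h | h
    · subst h
      exact absurd ((hFlt x 0).2 (hinit0 x hxB)) (not_lt.2 hF0)
    · exact h
  have hpast : ∀ y ∈ closedBall (0 : EuclideanSpace ℝ (Fin n)) R, ∀ τ ∈ Ico (0 : ℝ) t,
      F (y, τ) < 0 := by
    intro y hy τ hτ
    by_contra! h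
    have : t ≤ τ := hmin (a := (y, τ)) ⟨⟨hy, hτ.1, hτ.2.le.trans htt₁⟩, h⟩
    linarith [hτ.2]
  have hnow : ∀ y ∈ closedBall (0 : EuclideanSpace ℝ (Fin n)) R, F (y, t) ≤ 0 := by
    intro y hy
    have hcy : ContinuousOn (fun τ => F (y, τ)) (Ico 0 T) :=
      hFc.comp (by fun_prop) (fun τ hτ => ⟨hy, hτ⟩)
    have hca : ContinuousAt (fun τ => F (y, τ)) t := hcy.continuousAt (Ico_mem_nhds hpos htT)
    refine le_of_tendsto (hca.tendsto.mono_left (nhdsWithin_le_nhds (s := Iio t))) ?_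
    filter_upwards [Ioo_mem_nhdsLT hpos] with τ hτ
    exact (hpast y hy τ ⟨hτ.1.le, hτ.2⟩).le
  have htm : t ∈ Ioo (0 : ℝ) T := ⟨hpos, htT⟩
  have hxb : x ∈ ball (0 : EuclideanSpace ℝ (Fin n)) R := by
    have h1 : ‖x‖ ≤ R := by simpa using hxB
    rcases h1.eq_or_lt with h | h
    · exact absurd ((hFlt x t).2 (hbd t htm x h)) (not_lt.2 hF0)
    · simpa using h
  have hle := fun y hy => (hFle y t).1 (hnow y hy)
  have hpast' : ∀ τ ∈ Ioo (0 : ℝ) t, u x τ < barrier R T A B x τ ∧ v x τ < barrier R T A B x τ :=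
    fun τ hτ => (hFlt x τ).1 (hpast x hxB τ ⟨hτ.1.le, hτ.2⟩)
  have hu := no_contact hR hA hB hlam1 hlamA1 htm hxb (hs.reg_space_u t htm)
    (hs.reg_time_u x hxB t htm) (hs.pde_u x hxb t htm) (fun y hy => (hle y hy).1) (hle x hxB).2
    (fun τ hτ => (hpast' τ hτ).1.le)
  have hv := no_contact hR hA hB hlam2 hlamA2 htm hxb (hs.reg_space_v t htm)
    (hs.reg_time_v x hxB t htm) (hs.pde_v x hxb t htm) (fun y hy => (hle y hy).2) (hle x hxB).1
    (fun τ hτ => (hpast' τ hτ).2.le)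
  exact absurd ((hFlt x t).2 ⟨lt_of_le_of_ne (hle x hxB).1 hu, lt_of_le_of_ne (hle x hxB).2 hv⟩)
    (not_lt.2 hF0)

/-- A function with `f_t > Δf` inside, positive outward normal derivative on the sphere and
nonnegative initial values is nonnegative. -/
lemma nonneg_of_supersolution {R T : ℝ} (hR : 0 < R) {f : EuclideanSpace ℝ (Fin n) → ℝ → ℝ}
    (hc : ContinuousOn (fun p : EuclideanSpace ℝ (Fin n) × ℝ => f p.1 p.2)
      ((closedBall (0 : EuclideanSpace ℝ (Fin n)) R) ×ˢ Ico (0 : ℝ) T))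
    (hreg : ∀ t ∈ Ioo (0 : ℝ) T,
      ContDiffOn ℝ 2 (fun x => f x t) (closedBall (0 : EuclideanSpace ℝ (Fin n)) R))
    (htime : ∀ x ∈ closedBall (0 : EuclideanSpace ℝ (Fin n)) R, ∀ t ∈ Ioo (0 : ℝ) T,
      DifferentiableAt ℝ (f x) t)
    (hpde : ∀ x ∈ ball (0 : EuclideanSpace ℝ (Fin n)) R, ∀ t ∈ Ioo (0 : ℝ) T,
      lap (fun y => f y t) x < deriv (f x) t)
    (hbc : ∀ x : EuclideanSpace ℝ (Fin n), ‖x‖ = R → ∀ t ∈ Ioo (0 : ℝ) T,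
      0 < normalDeriv R (fun y => f y t) x)
    (hinit0 : ∀ x ∈ closedBall (0 : EuclideanSpace ℝ (Fin n)) R, 0 ≤ f x 0) :
    ∀ x ∈ closedBall (0 : EuclideanSpace ℝ (Fin n)) R, ∀ t ∈ Ico (0 : ℝ) T, 0 ≤ f x t := by
  intro x₁ hx₁ t₁ ht₁
  by_contra! hneg
  set Q := (closedBall (0 : EuclideanSpace ℝ (Fin n)) R) ×ˢ Icc (0 : ℝ) t₁ with hQ
  have hQsub : Q ⊆ (closedBall (0 : EuclideanSpace ℝ (Fin n)) R) ×ˢ Ico (0 : ℝ) T :=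
    prod_mono_right (fun t ht => ⟨ht.1, lt_of_le_of_lt ht.2 ht₁.2⟩)
  have hQc : IsCompact Q := (isCompact_closedBall _ _).prod isCompact_Icc
  have hmem₁ : (x₁, t₁) ∈ Q := ⟨hx₁, ht₁.1, le_rfl⟩
  obtain ⟨⟨x, t⟩, hxt, hmin⟩ := hQc.exists_isMinOn ⟨_, hmem₁⟩ (hc.mono hQsub)
  have hxB : x ∈ closedBall (0 : EuclideanSpace ℝ (Fin n)) R := hxt.1
  have htt₁ : t ≤ t₁ := hxt.2.2
  have hval : f x t < 0 := lt_of_le_of_lt (hmin hmem₁) hneg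
  have hpos : 0 < t := by
    rcases hxt.2.1.eq_or_lt with h | h
    · have h' : (0 : ℝ) = t := h
      rw [← h'] at hval
      exact absurd (hinit0 x hxB) (not_le.2 hval)
    · exact h
  have htm : t ∈ Ioo (0 : ℝ) T := ⟨hpos, lt_of_le_of_lt htt₁ ht₁.2⟩
  have hspace : ∀ y ∈ closedBall (0 : EuclideanSpace ℝ (Fin n)) R, f x t ≤ f y t :=
    fun y hy => hmin (a := (y, t)) ⟨hy, hpos.le, htt₁⟩
  have hxR : ‖x‖ ≤ R := by simpa using hxB
  rcases hxR.eq_or_lt with h | h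
  · have hp := hbc x h t htm
    unfold normalDeriv at hp
    -- A nonzero value of `deriv` certifies differentiability.
    have hd := (differentiableAt_of_deriv_ne_zero hp.ne').hasDerivAt.neg
    have := deriv_nonneg_of_left (c := -R) (by linarith) hd (by
      intro s hs
      have hm : x + s • (R⁻¹ • x) ∈ closedBall (0 : EuclideanSpace ℝ (Fin n)) R := by
        have he : x + s • (R⁻¹ • x) = (1 + s * R⁻¹) • x := by
          rw [add_smul, one_smul, mul_smul]
        have h0 : 0 ≤ 1 + s * R⁻¹ := by
          have h3 : (s + R) * R⁻¹ = 1 + s * R⁻¹ := by field_simp; ring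
          rw [← h3]
          have : 0 ≤ s + R := by linarith [hs.1]
          positivity
        have h1 : 1 + s * R⁻¹ ≤ 1 := by
          have := mul_nonpos_of_nonpos_of_nonneg hs.2.le (inv_pos.2 hR).le
          linarith
        rw [mem_closedBall_zero_iff, he, norm_smul, Real.norm_of_nonneg h0, h]
        nlinarith
      have := hspace _ hm
      simpa using this)
    linarith
  · have hxb : x ∈ ball (0 : EuclideanSpace ℝ (Fin n)) R := by simpa using h
    have h1 := hpde x hxb t htm
    have h2 := lap_nonneg_of_min hxb (hreg t htm) hspace
    have h3 := deriv_nonneg_of_left hpos (htime x hxB t htm).hasDerivAt.neg (by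
      intro τ hτ
      have : f x t ≤ f x τ := hmin (a := (x, τ)) ⟨hxB, hτ.1.le, hτ.2.le.trans htt₁⟩
      simpa using this)
    linarith

end Slices

/-- Remark 4.2 (boundary blow-up set): there exists `λ₀ > 0`, depending only on `n, R, T`,
`‖u₀‖_∞`, `‖v₀‖_∞` (bounded here by `Ku`, `Kv`) and the constant `C` from the upper blow-up
rate estimate, such that for every blow-up solution with `max{λ₁,λ₂} ≤ λ₀`, `u` and `v`
are bounded on `K × (0,T)` for every compact `K ⊆ B_R`; consequently every blow-up point
lies on `∂B_R`. -/
theorem boundary_blowup_set {n : ℕ} (hn : 1 ≤ n) {R T C Ku Kv : ℝ}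
    (hR : 0 < R) (hT : 0 < T) (hC : 0 < C) :
    ∃ lam0 : ℝ, 0 < lam0 ∧
      ∀ lam1 lam2 : ℝ, 0 < lam1 → 0 < lam2 →
      ∀ u v : EuclideanSpace ℝ (Fin n) → ℝ → ℝ, ∀ u₀ v₀ : EuclideanSpace ℝ (Fin n) → ℝ,
        AdmissibleData n R u₀ v₀ →
        IsClassicalSolution n R T lam1 lam2 u v u₀ v₀ →
        BlowsUpAt n R T u v →
        (∀ x ∈ closedBall (0 : EuclideanSpace ℝ (Fin n)) R, |u₀ x| ≤ Ku) →
        (∀ x ∈ closedBall (0 : EuclideanSpace ℝ (Fin n)) R, |v₀ x| ≤ Kv) →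
        (∀ t ∈ Ioo (0 : ℝ) T, ∀ x : EuclideanSpace ℝ (Fin n), ‖x‖ = R →
          Real.exp (u x t) ≤ C / (T - t) ∧ Real.exp (v x t) ≤ C / (T - t)) →
        max lam1 lam2 ≤ lam0 →
        (∀ K : Set (EuclideanSpace ℝ (Fin n)), IsCompact K →
            K ⊆ ball (0 : EuclideanSpace ℝ (Fin n)) R →
            ∃ M : ℝ, ∀ x ∈ K, ∀ t ∈ Ioo (0 : ℝ) T, |u x t| ≤ M ∧ |v x t| ≤ M) ∧
        (∀ x ∈ closedBall (0 : EuclideanSpace ℝ (Fin n)) R,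
            IsBlowUpPoint n R T u v x → ‖x‖ = R) := by
  set B : ℝ := 4 * n * R ^ 2 + 16 * R ^ 2 + 2 with hB
  have hB0 : 0 < B := by positivity
  set A : ℝ := B * C + Real.exp (max Ku Kv) * (R ^ 4 + B * T) + 1 with hAdef
  have hA : 0 < A := by positivity
  refine ⟨1 / A, by positivity, ?_⟩
  intro lam1 lam2 hl1 hl2 u v u₀ v₀ had hs _ hKu hKv hrate hmax
  have hlA : ∀ l : ℝ, l ≤ max lam1 lam2 → l * A ≤ 1 := fun l hl => by
    rw [← le_div_iff₀ hA]
    exact hl.trans hmax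
  have hbd_aux : ∀ t ∈ Ioo (0 : ℝ) T, ∀ x : EuclideanSpace ℝ (Fin n), ‖x‖ = R → ∀ w : ℝ,
      Real.exp w ≤ C / (T - t) → w < barrier R T A B x t := by
    intro t ht x hx w hw
    have hTt : 0 < T - t := sub_pos.2 ht.2
    rw [← Real.exp_lt_exp, exp_barrier hA hB0 ht.2, hx]
    refine lt_of_le_of_lt hw ?_
    rw [div_lt_div_iff₀ hTt (by simpa using mul_pos hB0 hTt)]
    have h1 : B * C < A := by
      have : 0 < Real.exp (max Ku Kv) * (R ^ 4 + B * T) := by positivity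
      linarith
    nlinarith [mul_lt_mul_of_pos_right h1 hTt]
  have hin_aux : ∀ x ∈ closedBall (0 : EuclideanSpace ℝ (Fin n)) R, ∀ w : ℝ, w ≤ max Ku Kv →
      w < barrier R T A B x 0 := by
    intro x hx w hw
    have hz := barrier_arg_pos (R := R) hB0 hT x
    rw [← Real.exp_lt_exp, exp_barrier hA hB0 hT, lt_div_iff₀ hz]
    have hxR : ‖x‖ ≤ R := by simpa using hx
    have h1 : (R ^ 2 - ‖x‖ ^ 2) ^ 2 ≤ R ^ 4 := by
      have h2 : ‖x‖ ^ 2 ≤ R ^ 2 := by gcongr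
      have h3 : 0 ≤ ‖x‖ ^ 2 := by positivity
      calc (R ^ 2 - ‖x‖ ^ 2) ^ 2 ≤ (R ^ 2) ^ 2 := by
            gcongr
            linarith
        _ = R ^ 4 := by ring
    have h4 : Real.exp w * ((R ^ 2 - ‖x‖ ^ 2) ^ 2 + B * (T - 0))
        ≤ Real.exp (max Ku Kv) * (R ^ 4 + B * T) := by
      rw [sub_zero] at hz ⊢
      gcongr
    have : 0 < B * C := by positivity
    linarith
  have hup := lt_barrier hR hA hB hl1 hl2 (hlA _ (le_max_left _ _)) (hlA _ (le_max_right _ _)) hs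
    (fun t ht x hx => ⟨hbd_aux t ht x hx _ (hrate t ht x hx).1,
      hbd_aux t ht x hx _ (hrate t ht x hx).2⟩)
    (fun x hx => ⟨hin_aux x hx _ (by
        rw [hs.init_u x hx]
        exact (le_abs_self _).trans ((hKu x hx).trans (le_max_left _ _))),
      hin_aux x hx _ (by
        rw [hs.init_v x hx]
        exact (le_abs_self _).trans ((hKv x hx).trans (le_max_right _ _)))⟩)
  have hu0 := nonneg_of_supersolution hR hs.cont_u hs.reg_space_u hs.reg_time_u
    (fun x hx t ht => by
      rw [hs.pde_u x hx t ht]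
      have : 0 < lam1 * Real.exp (v x t) := by positivity
      linarith)
    (fun x hx t ht => by rw [hs.bc_u x hx t ht]; positivity)
    (fun x hx => by rw [hs.init_u x hx]; exact had.u0_nonneg x hx)
  have hv0 := nonneg_of_supersolution hR hs.cont_v hs.reg_space_v hs.reg_time_v
    (fun x hx t ht => by
      rw [hs.pde_v x hx t ht]
      have : 0 < lam2 * Real.exp (u x t) := by positivity
      linarith)
    (fun x hx t ht => by rw [hs.bc_v x hx t ht]; positivity)
    (fun x hx => by rw [hs.init_v x hx]; exact had.v0_nonneg x hx)
  have hmain : ∀ K : Set (EuclideanSpace ℝ (Fin n)), IsCompact K →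
      K ⊆ ball (0 : EuclideanSpace ℝ (Fin n)) R →
      ∃ M : ℝ, ∀ x ∈ K, ∀ t ∈ Ioo (0 : ℝ) T, |u x t| ≤ M ∧ |v x t| ≤ M := by
    intro K hK hKB
    have hpos : ∀ x ∈ K, 0 < (R ^ 2 - ‖x‖ ^ 2) ^ 2 := by
      intro x hx
      have h1 : ‖x‖ < R := by simpa using hKB hx
      have h2 : ‖x‖ ^ 2 < R ^ 2 := by gcongr
      have h3 : 0 < R ^ 2 - ‖x‖ ^ 2 := by linarith
      positivity
    -- Dropping `B (T - t)` from the barrier leaves a bound that does not depend on `t`.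
    have hcont : ContinuousOn (fun x : EuclideanSpace ℝ (Fin n) =>
        Real.log A - Real.log ((R ^ 2 - ‖x‖ ^ 2) ^ 2)) K :=
      continuousOn_const.sub (ContinuousOn.log (by fun_prop) (fun x hx => (hpos x hx).ne'))
    obtain ⟨M, hM⟩ := hK.bddAbove_image hcont
    refine ⟨M, fun x hx t ht => ?_⟩
    have hxB := ball_subset_closedBall (hKB hx)
    have htI : t ∈ Ico (0 : ℝ) T := ⟨ht.1.le, ht.2⟩
    have hb : barrier R T A B x t ≤ M := by
      refine le_trans ?_ (hM (mem_image_of_mem _ hx))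
      have h1 : 0 < B * (T - t) := mul_pos hB0 (sub_pos.2 ht.2)
      have h2 := Real.log_le_log (hpos x hx) (le_add_of_nonneg_right h1.le)
      simp only [barrier]
      linarith
    rw [abs_of_nonneg (hu0 x hxB t htI), abs_of_nonneg (hv0 x hxB t htI)]
    exact ⟨(hup x hxB t htI).1.le.trans hb, (hup x hxB t htI).2.le.trans hb⟩
  refine ⟨hmain, ?_⟩
  rintro x hx ⟨xs, ts, _, hts, hxs, _, hblow⟩
  have hxR : ‖x‖ ≤ R := by simpa using hx
  by_contra hne
  have hlt : ‖x‖ < R := lt_of_le_of_ne hxR hne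
  have hsub : closedBall x ((R - ‖x‖) / 2) ⊆ ball (0 : EuclideanSpace ℝ (Fin n)) R := by
    intro y hy
    rw [mem_closedBall, dist_eq_norm] at hy
    rw [mem_ball_zero_iff]
    have := norm_le_norm_add_norm_sub' y x
    linarith
  obtain ⟨M, hM⟩ := hmain _ (isCompact_closedBall x ((R - ‖x‖) / 2)) hsub
  have hev : ∀ᶠ k in atTop, xs k ∈ closedBall x ((R - ‖x‖) / 2) :=
    hxs (closedBall_mem_nhds x (by linarith))
  rcases hblow with h | h
  · obtain ⟨k, hk1, hk2⟩ := (hev.and (h.eventually_gt_atTop M)).exists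
    have := (le_abs_self _).trans (hM _ hk1 _ (hts k)).1
    linarith
  · obtain ⟨k, hk1, hk2⟩ := (hev.and (h.eventually_gt_atTop M)).exists
    have := (le_abs_self _).trans (hM _ hk1 _ (hts k)).2
    linarith
end
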